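/- Suppose the sequence g_n is non-decreasing, the sequence k_n/g_n is eventually non-decreasing, and ∑_{n≥1} g_n^{-1} = ∞. If the initial condition x belongs to H^s for every s>0, then there exists a weak solution X of the dyadic model with initial condition x such that X ∈ L^∞([0,∞); H^s) for every s>0 (i.e. sup_{t≥0} ∑_{n≥1} 2^{2sn} X_n(t)² < ∞ for every s>0), and this solution is unique in the class L³_loc([0,∞); W^{β/3,3}). -/

import Mathlib

open scoped BigOperators ENNReal
open MeasureTheory Filter Set Topology

/-- `kₙ = 2^{βn}`. -/
noncomputable def kk (β : ℝ) (n : ℕ) : ℝ := (2 : ℝ) ^ (β * n)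

/-- A weak solution of the dyadic model: `X 0 ≡ 0`, `X n 0 = x n`, and the ODE holds
for every `n ≥ 1` and `t ≥ 0` (the derivative being taken within `[0,∞)`). -/
def IsDyadicSolution (β : ℝ) (φ g : ℕ → ℝ) (x : ℕ → ℝ) (X : ℕ → ℝ → ℝ) : Prop :=
  (∀ t : ℝ, X 0 t = 0) ∧
  (∀ n : ℕ, 1 ≤ n → X n 0 = x n) ∧
  (∀ n : ℕ, 1 ≤ n → ∀ t : ℝ, 0 ≤ t →
    HasDerivWithinAt (X n)
      (φ (n - 1) * kk β (n - 1) * (X (n - 1) t) ^ 2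
        - φ n * kk β n * X n t * X (n + 1) t
        - kk β n / g n * X n t) (Set.Ici 0) t)

/-- `x ∈ Hˢ`, i.e. `∑_{n≥1} 2^{2sn} xₙ² < ∞`. -/
def MemHs (s : ℝ) (x : ℕ → ℝ) : Prop :=
  Summable (fun n : ℕ => (2 : ℝ) ^ (2 * s * ((n : ℝ) + 1)) * (x (n + 1)) ^ 2)

/-- `X ∈ L^∞(I; Hˢ)`. -/
def MemLinftyHs (s : ℝ) (X : ℕ → ℝ → ℝ) (I : Set ℝ) : Prop :=
  ∃ M : ℝ, ∀ t ∈ I,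
    Summable (fun n : ℕ => (2 : ℝ) ^ (2 * s * ((n : ℝ) + 1)) * (X (n + 1) t) ^ 2) ∧
    (∑' n : ℕ, (2 : ℝ) ^ (2 * s * ((n : ℝ) + 1)) * (X (n + 1) t) ^ 2) ≤ M

/-- `X ∈ L³([0,T]; W^{β/3,3})`, i.e. `∫_0^T ∑_{n≥1} 2^{βn} |Xₙ(t)|³ dt < ∞`. -/
def MemL3W (β : ℝ) (X : ℕ → ℝ → ℝ) (T : ℝ) : Prop :=
  (∫⁻ t in Set.Ioc (0 : ℝ) T,
      ∑' n : ℕ, ENNReal.ofReal ((2 : ℝ) ^ (β * ((n : ℝ) + 1)) * |X (n + 1) t| ^ 3)) < ⊤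

/-!
Write `G n = max (g (n + 1)) 1`. In a Galerkin approximation, the energy of the components beyond
`n + 1`, together with what they have dissipated, grows only through the flux from the component
`n + 1`, which is at most `Φ * G n * |X (n + 2)|` times the rate at which that component dissipates.
Hence, up to terms carrying the initial data, the square root `h n` of the energy dissipated beyond
`n` satisfies `h (n + 1) ≤ b * G n * (h n ^ 2 - h (n + 1) ^ 2)`. As long as `h * G` stays large,
this forces `h` to drop by a multiple of `(G n)⁻¹`, which the divergence of `∑ (G n)⁻¹` allows only
up to an index depending on the data alone. Once `h * G` is small, the recursion is superlinear and
`h * G` decays at any prescribed geometric rate.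

The square distance of two solutions on the components `1, …, N` obeys a Grönwall inequality whose
forcing is the flux through the component `N`. Under geometric decay this flux vanishes as `N → ∞`,
so the Galerkin approximations converge. For a solution in `L³([0, T]; W^{β/3, 3})` its time
integral is bounded by the `N`-th terms of a convergent series, which gives uniqueness.
-/

section Calculus

theorem hasDerivWithinAt_integral_Icc {E : Type*} [NormedAddCommGroup E] [NormedSpace ℝ E]
    [CompleteSpace E] {q : ℝ → E} {a b t : ℝ} (hq : ContinuousOn q (Icc a b)) (ht : t ∈ Icc a b) :
    HasDerivWithinAt (fun u => ∫ s in a..u, q s) (q t) (Icc a b) t := by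
  have : Fact (t ∈ Icc a b) := ⟨ht⟩
  have hq' : ContinuousOn q (uIcc a t) := by
    rw [uIcc_of_le ht.1]
    exact hq.mono (Icc_subset_Icc_right ht.2)
  exact intervalIntegral.integral_hasDerivWithinAt_right hq'.intervalIntegrable
    (hq.stronglyMeasurableAtFilter_nhdsWithin measurableSet_Icc t) (hq t ht)

theorem antitoneOn_Icc_of_hasDerivWithinAt_nonpos {f f' : ℝ → ℝ} {a b : ℝ}
    (hf : ∀ t ∈ Icc a b, HasDerivWithinAt f (f' t) (Icc a b) t)
    (hf' : ∀ t ∈ Icc a b, f' t ≤ 0) : AntitoneOn f (Icc a b) :=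
  antitoneOn_of_hasDerivWithinAt_nonpos (convex_Icc a b)
    (fun t ht => (hf t ht).continuousWithinAt)
    (fun t ht => (hf t (interior_subset ht)).mono interior_subset)
    (fun t ht => hf' t (interior_subset ht))

theorem le_exp_mul_add_integral_of_deriv_le {E E' q : ℝ → ℝ} {K T : ℝ} (hK : 0 ≤ K)
    (hE : ∀ t ∈ Icc 0 T, HasDerivWithinAt E (E' t) (Icc 0 T) t)
    (hq : ContinuousOn q (Icc 0 T)) (hq₀ : ∀ t ∈ Icc 0 T, 0 ≤ q t)
    (hE' : ∀ t ∈ Icc 0 T, E' t ≤ K * E t + q t) :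
    ∀ t ∈ Icc 0 T, E t ≤ Real.exp (K * t) * (E 0 + ∫ s in (0 : ℝ)..t, q s) := by
  have hdecr : AntitoneOn (fun t => Real.exp (-(K * t)) * E t - ∫ s in (0 : ℝ)..t, q s)
      (Icc 0 T) := by
    refine antitoneOn_Icc_of_hasDerivWithinAt_nonpos
      (f' := fun t => Real.exp (-(K * t)) * -K * E t + Real.exp (-(K * t)) * E' t - q t)
      (fun t ht => ?_) fun t ht => ?_
    · have hlin : HasDerivAt (fun t => -(K * t)) (-K) t := by
        simpa using ((hasDerivAt_id t).const_mul K).fun_neg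
      exact (hlin.exp.hasDerivWithinAt.fun_mul (hE t ht)).fun_sub
        (hasDerivWithinAt_integral_Icc hq ht)
    · have hexp_le : Real.exp (-(K * t)) ≤ 1 :=
        Real.exp_le_one_iff.2 (neg_nonpos.2 (mul_nonneg hK ht.1))
      calc Real.exp (-(K * t)) * -K * E t + Real.exp (-(K * t)) * E' t - q t
          = Real.exp (-(K * t)) * (E' t - K * E t) - q t := by ring
        _ ≤ Real.exp (-(K * t)) * q t - q t := by
          gcongr
          linarith [hE' t ht]
        _ ≤ 0 := sub_nonpos.2 (mul_le_of_le_one_left (hq₀ t ht) hexp_le)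
  intro t ht
  have h := hdecr ⟨le_rfl, ht.1.trans ht.2⟩ ht ht.1
  simp only [mul_zero, neg_zero, Real.exp_zero, one_mul, intervalIntegral.integral_same,
    sub_zero] at h
  calc E t = Real.exp (K * t) * (Real.exp (-(K * t)) * E t) := by
        rw [← mul_assoc, ← Real.exp_add, add_neg_cancel, Real.exp_zero, one_mul]
    _ ≤ Real.exp (K * t) * (E 0 + ∫ s in (0 : ℝ)..t, q s) := by
        gcongr
        linarith

theorem norm_le_of_inner_deriv_nonpos {E : Type*} [NormedAddCommGroup E]
    [InnerProductSpace ℝ E] {y y' : ℝ → E} {T : ℝ}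
    (hy : ∀ t ∈ Icc 0 T, HasDerivWithinAt y (y' t) (Icc 0 T) t)
    (hyy' : ∀ t ∈ Icc 0 T, inner ℝ (y t) (y' t) ≤ 0) : ∀ t ∈ Icc 0 T, ‖y t‖ ≤ ‖y 0‖ := by
  have hanti : AntitoneOn (fun t => ‖y t‖ ^ 2) (Icc 0 T) :=
    antitoneOn_Icc_of_hasDerivWithinAt_nonpos (fun t ht => (hy t ht).norm_sq)
      fun t ht => by linarith [hyy' t ht]
  intro t ht
  exact le_of_sq_le_sq (hanti ⟨le_rfl, ht.1.trans ht.2⟩ ht ht.1) (norm_nonneg _)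

theorem exists_hasDerivWithinAt_of_hasCompactSupport {E : Type*} [NormedAddCommGroup E]
    [NormedSpace ℝ E] [CompleteSpace E] {F : E → E} (hF : ContDiff ℝ 1 F)
    (hF' : HasCompactSupport F) (v : E) {T : ℝ} (hT : 0 ≤ T) :
    ∃ y : ℝ → E, y 0 = v ∧ ∀ t ∈ Icc 0 T, HasDerivWithinAt y (F (y t)) (Icc 0 T) t := by
  obtain ⟨K, hK⟩ := hF.lipschitzWith_of_hasCompactSupport hF' one_ne_zero
  obtain ⟨C, hC⟩ := hF'.exists_bound_of_continuous hF.continuous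
  have hC₀ : 0 ≤ C := (norm_nonneg _).trans (hC 0)
  have hpl : IsPicardLindelof (fun _ => F) (tmin := 0) (tmax := T) ⟨0, le_rfl, hT⟩ v
      ⟨C * T, mul_nonneg hC₀ hT⟩ 0 ⟨C, hC₀⟩ K := by
    refine IsPicardLindelof.of_time_independent (fun w _ => hC w) hK.lipschitzOnWith ?_
    simp only [sub_zero, sub_self, max_eq_left hT, NNReal.coe_zero]
    exact le_rfl
  exact hpl.exists_eq_forall_mem_Icc_hasDerivWithinAt₀

-- A smooth cutoff makes the field globally Lipschitz; its solution never leaves the ball where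
-- the cutoff equals `1`, because the truncated field is still dissipative.
theorem exists_hasDerivWithinAt_of_inner_nonpos {E : Type*} [NormedAddCommGroup E]
    [InnerProductSpace ℝ E] [FiniteDimensional ℝ E] {F : E → E} (hF : ContDiff ℝ 1 F)
    (hdiss : ∀ v, inner ℝ v (F v) ≤ 0) (v : E) {T : ℝ} (hT : 0 ≤ T) :
    ∃ y : ℝ → E, y 0 = v ∧ ∀ t ∈ Icc 0 T, HasDerivWithinAt y (F (y t)) (Icc 0 T) t := by
  let χ : ContDiffBump (0 : E) := ⟨‖v‖ + 1, ‖v‖ + 2, by positivity, by linarith⟩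
  obtain ⟨y, hy₀, hy⟩ := exists_hasDerivWithinAt_of_hasCompactSupport
    (χ.contDiff.smul hF) (χ.hasCompactSupport.smul_right (f' := F)) v hT
  have hy_norm : ∀ t ∈ Icc 0 T, ‖y t‖ ≤ ‖y 0‖ :=
    norm_le_of_inner_deriv_nonpos hy fun t _ => by
      rw [Pi.smul_apply', inner_smul_right]
      exact mul_nonpos_of_nonneg_of_nonpos χ.nonneg (hdiss _)
  refine ⟨y, hy₀, fun t ht => ?_⟩
  have hone : χ (y t) = 1 := by
    apply χ.one_of_mem_closedBall
    rw [mem_closedBall_zero_iff]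
    exact (hy_norm t ht).trans (by rw [hy₀]; exact (le_add_of_nonneg_right zero_le_one))
  simpa only [Pi.smul_apply', hone, one_smul] using hy t ht

end Calculus

section Field

variable {a d x y : ℕ → ℝ} {N : ℕ} {S : Set ℝ} {T : ℝ} {X : ℕ → ℝ → ℝ}

/-- The right-hand side of the equation of the `(n + 1)`-st component of the dyadic model, with
`a n = φₙ kₙ` and `d n = kₙ / gₙ`. The shift makes all indices natural numbers without
subtraction. -/
def dyadicField (a d y : ℕ → ℝ) (n : ℕ) : ℝ :=
  a n * y n ^ 2 - a (n + 1) * y (n + 1) * y (n + 2) - d (n + 1) * y (n + 1)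

theorem sum_mul_dyadicField (a d y : ℕ → ℝ) {n N : ℕ} (h : n ≤ N) :
    ∑ i ∈ Finset.Ico n N, y (i + 1) * dyadicField a d y i =
      a n * y n ^ 2 * y (n + 1) - a N * y N ^ 2 * y (N + 1)
        - ∑ i ∈ Finset.Ico n N, d (i + 1) * y (i + 1) ^ 2 := by
  induction N, h using Nat.le_induction with
  | base => simp
  | succ N h ih =>
    rw [Finset.sum_Ico_succ_top h, Finset.sum_Ico_succ_top h, ih, dyadicField]
    ring

theorem abs_dyadicField_le {n : ℕ} {B : ℝ} (hy : ∀ i, |y i| ≤ B) :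
    |dyadicField a d y n| ≤ |a n| * B ^ 2 + |a (n + 1)| * B * B + |d (n + 1)| * B := by
  have hB : 0 ≤ B := (abs_nonneg _).trans (hy 0)
  have h₁ : |a n * y n ^ 2| ≤ |a n| * B ^ 2 := by
    rw [abs_mul, abs_pow]
    gcongr
    exact hy n
  have h₂ : |a (n + 1) * y (n + 1) * y (n + 2)| ≤ |a (n + 1)| * B * B := by
    rw [abs_mul, abs_mul]
    gcongr
    exacts [hy _, hy _]
  have h₃ : |d (n + 1) * y (n + 1)| ≤ |d (n + 1)| * B := by
    rw [abs_mul]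
    gcongr
    exact hy _
  exact (abs_sub _ _).trans (add_le_add ((abs_sub _ _).trans (add_le_add h₁ h₂)) h₃)

/-- `X` solves the equations of the components `1, …, N` of the dyadic model on the time set `S`,
with initial datum `x`; the components beyond `N` are arbitrary. Weak solutions and their
Galerkin approximations are both of this kind. -/
structure IsSolutionBelow (a d x : ℕ → ℝ) (N : ℕ) (S : Set ℝ) (X : ℕ → ℝ → ℝ) : Prop where
  zero : ∀ t, X 0 t = 0
  init : ∀ n < N, X (n + 1) 0 = x (n + 1)
  deriv : ∀ n < N, ∀ t ∈ S,
    HasDerivWithinAt (X (n + 1)) (dyadicField a d (fun m => X m t) n) S t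

theorem IsSolutionBelow.mono {N' : ℕ} {S' : Set ℝ} (hX : IsSolutionBelow a d x N S X)
    (hN : N' ≤ N) (hS : S' ⊆ S) : IsSolutionBelow a d x N' S' X where
  zero := hX.zero
  init n hn := hX.init n (hn.trans_le hN)
  deriv n hn t ht := (hX.deriv n (hn.trans_le hN) t (hS ht)).mono hS

theorem IsSolutionBelow.continuousOn (hX : IsSolutionBelow a d x N S X) {n : ℕ} (hn : n ≤ N) :
    ContinuousOn (X n) S := by
  rcases n with - | n
  · rw [funext hX.zero]
    exact continuousOn_const
  · exact fun t ht => (hX.deriv n hn t ht).continuousWithinAt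

theorem isDyadicSolution_iff {β : ℝ} {φ g : ℕ → ℝ} :
    IsDyadicSolution β φ g x X ↔
      ∀ N, IsSolutionBelow (fun n => φ n * kk β n) (fun n => kk β n / g n) x N (Ici 0) X := by
  constructor
  · rintro ⟨hzero, hinit, hderiv⟩ N
    exact ⟨hzero, fun n _ => hinit (n + 1) n.succ_pos,
      fun n _ t ht => hderiv (n + 1) n.succ_pos t ht⟩
  · intro hX
    refine ⟨(hX 0).zero, fun n hn => ?_, fun n hn t ht => ?_⟩ <;>
      obtain ⟨m, rfl⟩ := Nat.exists_eq_add_of_le' hn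
    · exact (hX (m + 1)).init m m.lt_succ_self
    · exact (hX (m + 1)).deriv m m.lt_succ_self t ht

/-- `X` is the Galerkin approximation of the dyadic model on `[0, T]` that keeps the components
`1, …, N` only. -/
structure IsGalerkin (a d x : ℕ → ℝ) (N : ℕ) (T : ℝ) (X : ℕ → ℝ → ℝ) : Prop
    extends IsSolutionBelow a d x N (Icc 0 T) X where
  vanish : ∀ n, N < n → ∀ t, X n t = 0

theorem IsGalerkin.continuousOn (hX : IsGalerkin a d x N T X) (n : ℕ) :
    ContinuousOn (X n) (Icc 0 T) := by
  rcases le_or_gt n N with hn | hn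
  · exact hX.toIsSolutionBelow.continuousOn hn
  · rw [funext (hX.vanish n hn)]
    exact continuousOn_const

/-- The sequence whose components `1, …, N` are the coordinates of `v`, all others being `0`. -/
def zeroExtend (v : EuclideanSpace ℝ (Fin N)) : ℕ → ℝ
  | 0 => 0
  | n + 1 => if h : n < N then v ⟨n, h⟩ else 0

theorem zeroExtend_succ (v : EuclideanSpace ℝ (Fin N)) (i : Fin N) :
    zeroExtend v (i + 1) = v i := by
  simp only [zeroExtend, i.isLt, dite_true]

theorem zeroExtend_of_lt (v : EuclideanSpace ℝ (Fin N)) {n : ℕ} (hn : N < n) :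
    zeroExtend v n = 0 := by
  obtain ⟨m, rfl⟩ := Nat.exists_eq_add_of_lt hn
  exact dif_neg (by omega)

theorem contDiff_zeroExtend (n : ℕ) :
    ContDiff ℝ 1 fun v : EuclideanSpace ℝ (Fin N) => zeroExtend v n := by
  rcases n with - | n
  · exact contDiff_const
  · simp only [zeroExtend]
    split_ifs
    · fun_prop
    · exact contDiff_const

/-- The dyadic vector field truncated to the components `1, …, N`. -/
def galerkinField (a d : ℕ → ℝ) (v : EuclideanSpace ℝ (Fin N)) : EuclideanSpace ℝ (Fin N) :=
  WithLp.toLp 2 fun i => dyadicField a d (zeroExtend v) i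

theorem contDiff_galerkinField (a d : ℕ → ℝ) :
    ContDiff ℝ 1 (galerkinField (N := N) a d) := by
  rw [contDiff_euclidean]
  intro i
  simp only [galerkinField, dyadicField]
  have h := contDiff_zeroExtend (N := N)
  exact ((contDiff_const.mul ((h _).pow 2)).sub ((contDiff_const.mul (h _)).mul (h _))).sub
    (contDiff_const.mul (h _))

theorem inner_galerkinField_nonpos (hd : ∀ n, 0 ≤ d (n + 1)) (v : EuclideanSpace ℝ (Fin N)) :
    inner ℝ v (galerkinField a d v) ≤ 0 := by
  have hsum : inner ℝ v (galerkinField a d v) =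
      ∑ i ∈ Finset.Ico 0 N, zeroExtend v (i + 1) * dyadicField a d (zeroExtend v) i := by
    rw [Nat.Ico_zero_eq_range, Finset.sum_range, PiLp.inner_apply]
    refine Finset.sum_congr rfl fun i _ => ?_
    rw [zeroExtend_succ, galerkinField, RCLike.inner_apply, conj_trivial, mul_comm]
  have hdiss : 0 ≤ ∑ i ∈ Finset.Ico 0 N, d (i + 1) * zeroExtend v (i + 1) ^ 2 :=
    Finset.sum_nonneg fun i _ => mul_nonneg (hd i) (sq_nonneg _)
  rw [hsum, sum_mul_dyadicField _ _ _ N.zero_le, zeroExtend_of_lt v N.lt_succ_self]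
  simpa [zeroExtend] using hdiss

theorem exists_isGalerkin (hd : ∀ n, 0 ≤ d (n + 1)) (x : ℕ → ℝ) (N : ℕ) (hT : 0 ≤ T) :
    ∃ X, IsGalerkin a d x N T X := by
  obtain ⟨y, hy₀, hy⟩ := exists_hasDerivWithinAt_of_inner_nonpos (contDiff_galerkinField a d)
    (inner_galerkinField_nonpos hd) (WithLp.toLp 2 fun i : Fin N => x (i + 1)) hT
  refine ⟨fun n t => zeroExtend (y t) n, ⟨fun t => rfl, fun n hn => ?_, fun n hn t ht => ?_⟩,
    fun n hn t => zeroExtend_of_lt _ hn⟩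
  · rw [zeroExtend_succ (y 0) ⟨n, hn⟩, hy₀]
  · have h := (EuclideanSpace.proj (𝕜 := ℝ) (⟨n, hn⟩ : Fin N)).hasFDerivAt.comp_hasDerivWithinAt t
      (hy t ht)
    exact h.congr (fun s _ => zeroExtend_succ (y s) ⟨n, hn⟩) (zeroExtend_succ (y t) ⟨n, hn⟩)

end Field

section Cascade

variable {G h : ℕ → ℝ} {b B H K l δ : ℝ}

/-- The recursion satisfied by the square roots `h n` of the energies dissipated beyond the
`n`-th component: either `h (n + 1)` is already of the size of the data, or it is controlled by
the drop of `h ^ 2`. -/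
structure IsCascade (G : ℕ → ℝ) (b B H l : ℝ) (h : ℕ → ℝ) : Prop where
  nonneg : ∀ n, 0 ≤ h n
  antitone : Antitone h
  zero_le : h 0 ≤ H
  step : ∀ n, h (n + 1) * G (n + 1) ≤ B * l ^ (n + 1) ∨
    h (n + 1) ≤ b * G n * (h n ^ 2 - h (n + 1) ^ 2)

theorem min_div_le_sub_of_le_mul_sq_sub_sq {g u v : ℝ} (hb : 0 < b) (hg : 0 < g) (hδ : 0 < δ)
    (hvu : v ≤ u) (hv : δ ≤ v * g) (huv : v ≤ b * g * (u ^ 2 - v ^ 2)) :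
    min δ (1 / (3 * b)) / g ≤ u - v := by
  have hv₀ : 0 < v := pos_of_mul_pos_left (hδ.trans_le hv) hg.le
  rcases le_total u (2 * v) with huv' | huv'
  · have hmul : v * 1 ≤ v * (3 * b * g * (u - v)) := by
      calc v * 1 ≤ b * g * ((u - v) * (u + v)) := by linarith
        _ ≤ b * g * ((u - v) * (3 * v)) := by gcongr; linarith
        _ = v * (3 * b * g * (u - v)) := by ring
    have hone : 1 ≤ 3 * b * g * (u - v) := le_of_mul_le_mul_left hmul hv₀
    rw [div_le_iff₀ hg]
    refine (min_le_right _ _).trans ?_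
    rw [div_le_iff₀ (by positivity)]
    linarith
  · rw [div_le_iff₀ hg]
    calc min δ (1 / (3 * b)) ≤ v * g := (min_le_left _ _).trans hv
      _ ≤ (u - v) * g := by gcongr; linarith

-- Otherwise `h` would drop by a multiple of `(G n)⁻¹` at every step.
theorem exists_forall_isCascade_mul_lt (hb : 0 < b) (hG : ∀ n, 0 < G n)
    (hGK : ∀ n, G (n + 1) ≤ K * G n) (hGinv : ¬ Summable fun n => (G n)⁻¹) (hδ : 0 < δ) {n₁ : ℕ}
    (hn₁ : ∀ n, n₁ ≤ n → B * l ^ n < δ) (H : ℝ) :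
    ∃ N, ∀ h, IsCascade G b B H l h → ∃ m ∈ Icc n₁ N, h m * G m < δ := by
  have hK : 0 < K := pos_of_mul_pos_left ((hG 1).trans_le (hGK 0)) (hG 0).le
  set c := min (δ / K) (1 / (3 * b))
  have hc₀ : 0 < c := lt_min (div_pos hδ hK) (by positivity)
  have hdiv := (not_summable_iff_tendsto_nat_atTop_of_nonneg fun n => (inv_pos.2 (hG n)).le).1 hGinv
  obtain ⟨N, hN, hN₁⟩ := ((hdiv.eventually_gt_atTop
    (H / c + ∑ i ∈ Finset.range n₁, (G i)⁻¹)).and (eventually_ge_atTop n₁)).exists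
  refine ⟨N, fun h hh => ?_⟩
  by_contra! hlarge
  have hdrop : ∀ n ∈ Finset.Ico n₁ N, c * (G n)⁻¹ ≤ h n - h (n + 1) := fun n hn => by
    rw [Finset.mem_Ico] at hn
    have hlow := hlarge (n + 1) ⟨by omega, by omega⟩
    have hstep := (hh.step n).resolve_left (not_le.2 ((hn₁ (n + 1) (by omega)).trans_le hlow))
    refine min_div_le_sub_of_le_mul_sq_sub_sq hb (hG n) (div_pos hδ hK)
      (hh.antitone n.le_succ) ?_ hstep
    rw [div_le_iff₀ hK]
    calc δ ≤ h (n + 1) * G (n + 1) := hlow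
      _ ≤ h (n + 1) * (K * G n) := by gcongr; exacts [hh.nonneg _, hGK n]
      _ = h (n + 1) * G n * K := by ring
  have hsum : c * ∑ n ∈ Finset.Ico n₁ N, (G n)⁻¹ ≤ H :=
    calc c * ∑ n ∈ Finset.Ico n₁ N, (G n)⁻¹
        ≤ ∑ n ∈ Finset.Ico n₁ N, (h n - h (n + 1)) := by
          rw [Finset.mul_sum]
          exact Finset.sum_le_sum hdrop
      _ = h n₁ - h N := by
          rw [← neg_sub (h N), ← Finset.sum_Ico_sub h hN₁, ← Finset.sum_neg_distrib]
          simp only [neg_sub]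
      _ ≤ H := by linarith [hh.nonneg N, hh.antitone n₁.zero_le, hh.zero_le]
  rw [Finset.sum_Ico_eq_sub _ hN₁, ← le_div_iff₀' hc₀] at hsum
  linarith

-- Below the threshold the recursion is superlinear: `h G` is bounded by a multiple of its square.
theorem IsCascade.mul_le_of_mul_le (hh : IsCascade G b B H l h) (hb : 0 < b) (hG : ∀ n, 0 < G n)
    (hGK : ∀ n, G (n + 1) ≤ K * G n) (hl : 0 < l) (hl₁ : l < 1) (hδ : b * K * δ ≤ l) {m : ℕ}
    (hm : ∀ n, m ≤ n → B * l ^ n ≤ δ) (hmδ : h m * G m ≤ δ) {n : ℕ} (hn : m ≤ n) :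
    h n * G n ≤ max B (δ / l ^ m) * l ^ n := by
  have hK : 0 < K := pos_of_mul_pos_left ((hG 1).trans_le (hGK 0)) (hG 0).le
  have hw₀ : ∀ n, 0 ≤ h n * G n := fun n => mul_nonneg (hh.nonneg n) (hG n).le
  suffices h n * G n ≤ δ ∧ h n * G n ≤ max B (δ / l ^ m) * l ^ n from this.2
  induction n, hn using Nat.le_induction with
  | base =>
    refine ⟨hmδ, hmδ.trans ?_⟩
    rw [← div_le_iff₀ (pow_pos hl m)]
    exact le_max_right _ _
  | succ n hn ih =>
    rcases hh.step n with hdata | hdrop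
    · refine ⟨hdata.trans (hm _ (hn.trans n.le_succ)), hdata.trans ?_⟩
      gcongr
      exact le_max_left _ _
    · have hlin : h (n + 1) * G (n + 1) ≤ l * (h n * G n) :=
        calc h (n + 1) * G (n + 1) ≤ b * G n * h n ^ 2 * (K * G n) := by
              refine mul_le_mul (hdrop.trans ?_) (hGK n) (hG _).le (by have := hG n; positivity)
              exact mul_le_mul_of_nonneg_left (sub_le_self _ (sq_nonneg _))
                (mul_nonneg hb.le (hG n).le)
          _ = b * K * (h n * G n) * (h n * G n) := by ring
          _ ≤ b * K * δ * (h n * G n) := mul_le_mul_of_nonneg_right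
            (mul_le_mul_of_nonneg_left ih.1 (mul_nonneg hb.le hK.le)) (hw₀ n)
          _ ≤ l * (h n * G n) := mul_le_mul_of_nonneg_right hδ (hw₀ n)
      exact ⟨(hlin.trans (mul_le_of_le_one_left (hw₀ n) hl₁.le)).trans ih.1, hlin.trans
        ((mul_le_mul_of_nonneg_left ih.2 hl.le).trans_eq (by ring))⟩

theorem exists_forall_isCascade_mul_le (hb : 0 < b) (hG : ∀ n, 0 < G n)
    (hGK : ∀ n, G (n + 1) ≤ K * G n) (hGinv : ¬ Summable fun n => (G n)⁻¹) (hl : 0 < l)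
    (hl₁ : l < 1) (B H : ℝ) :
    ∃ C, 0 ≤ C ∧ ∀ h, IsCascade G b B H l h → ∀ n, h n * G n ≤ C * l ^ n := by
  have hK : 0 < K := pos_of_mul_pos_left ((hG 1).trans_le (hGK 0)) (hG 0).le
  set δ := l / (b * K) with hδ
  have hδ₀ : 0 < δ := by positivity
  have hBl : Tendsto (fun n => B * l ^ n) atTop (𝓝 0) := by
    simpa using (tendsto_pow_atTop_nhds_zero_of_lt_one hl.le hl₁).const_mul B
  obtain ⟨n₁, hn₁⟩ := eventually_atTop.1 (hBl.eventually_lt_const hδ₀)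
  obtain ⟨N, hN⟩ := exists_forall_isCascade_mul_lt hb hG hGK hGinv hδ₀ hn₁ H
  set M := ∑ i ∈ Finset.range (N + 1), G i
  set D := (δ + |H| * M) / l ^ N
  have hM₀ : 0 ≤ M := Finset.sum_nonneg fun i _ => (hG i).le
  have hDl : D * l ^ N = δ + |H| * M := div_mul_cancel₀ _ (pow_pos hl N).ne'
  have hD₀ : 0 ≤ D := by positivity
  refine ⟨max B 0 + D, by positivity, fun h hh n => ?_⟩
  obtain ⟨m, hm, hmδ⟩ := hN h hh
  rcases le_or_gt m n with hn | hn
  · refine (hh.mul_le_of_mul_le hb hG hGK hl hl₁ (by rw [hδ]; field_simp; exact le_rfl)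
      (fun k hk => (hn₁ k (hm.1.trans hk)).le) hmδ.le hn).trans ?_
    gcongr
    refine max_le ((le_max_left B 0).trans (le_add_of_nonneg_right hD₀)) ?_
    calc δ / l ^ m ≤ D := by
          rw [div_le_iff₀ (pow_pos hl m)]
          calc δ ≤ D * l ^ N := hDl ▸ le_add_of_nonneg_right (by positivity)
            _ ≤ D * l ^ m := mul_le_mul_of_nonneg_left
              (pow_le_pow_of_le_one hl.le hl₁.le hm.2) hD₀
      _ ≤ max B 0 + D := le_add_of_nonneg_left (le_max_right _ _)
  · have hnN : n < N := hn.trans_le hm.2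
    have hGM : G n ≤ M := Finset.single_le_sum (f := G) (fun i _ => (hG i).le)
      (Finset.mem_range.2 (hnN.trans N.lt_succ_self))
    have hhH : h n ≤ |H| := ((hh.antitone n.zero_le).trans hh.zero_le).trans (le_abs_self H)
    calc h n * G n ≤ |H| * M := mul_le_mul hhH hGM (hG n).le (abs_nonneg H)
      _ ≤ D * l ^ N := hDl ▸ le_add_of_nonneg_left hδ₀.le
      _ ≤ (max B 0 + D) * l ^ n := mul_le_mul (le_add_of_nonneg_left (le_max_right _ _))
        (pow_le_pow_of_le_one hl.le hl₁.le hnN.le) (pow_nonneg hl.le N) (by positivity)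

theorem not_summable_inv_max_one (hGinv : ¬ Summable fun n => (G n)⁻¹) :
    ¬ Summable fun n => (max (G n) 1)⁻¹ := by
  refine fun hsum => hGinv ((summable_congr_atTop ?_).1 hsum)
  filter_upwards [hsum.tendsto_atTop_zero.eventually_lt_const one_pos] with n hn
  have hmax : 1 < max (G n) 1 := (inv_lt_one₀ (by positivity)).1 hn
  rw [max_eq_left (lt_max_iff.1 hmax |>.resolve_right (lt_irrefl 1)).le]

theorem exists_forall_succ_le_mul (hG : ∀ n, 0 < G n) (hGK : ∀ᶠ n in atTop, G (n + 1) ≤ K * G n) :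
    ∃ K', 1 ≤ K' ∧ ∀ n, G (n + 1) ≤ K' * G n := by
  have hbdd : BddAbove (range fun n => G (n + 1) / G n) := by
    refine IsBoundedUnder.bddAbove_range ⟨K, ?_⟩
    rw [eventually_map]
    filter_upwards [hGK] with n hn
    rwa [div_le_iff₀ (hG n)]
  obtain ⟨K', hK'⟩ := hbdd
  exact ⟨max K' 1, le_max_right _ _, fun n =>
    (div_le_iff₀ (hG n)).1 ((hK' (mem_range_self n)).trans (le_max_left _ _))⟩

end Cascade

section TailEnergy

variable {a d x G : ℕ → ℝ} {N n : ℕ} {T t Φ : ℝ} {X : ℕ → ℝ → ℝ}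

/-- Twice the energy dissipated by the component `n + 1` during `[0, t]`. -/
noncomputable def dissipation (d : ℕ → ℝ) (X : ℕ → ℝ → ℝ) (n : ℕ) (t : ℝ) : ℝ :=
  ∫ s in (0 : ℝ)..t, 2 * d (n + 1) * X (n + 1) s ^ 2

/-- The energy of the components `n + 1, …, N` at time `t`, increased by what these components
have dissipated so far. Only the flux from the component `n` changes it. -/
noncomputable def tailEnergy (d : ℕ → ℝ) (X : ℕ → ℝ → ℝ) (N n : ℕ) (t : ℝ) : ℝ :=
  ∑ i ∈ Finset.Ico n N, (X (i + 1) t ^ 2 + dissipation d X i t)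

/-- The square root of the maximum over `[0, T]` of the tail energy beyond the component `n`. -/
noncomputable def peak (d : ℕ → ℝ) (X : ℕ → ℝ → ℝ) (N : ℕ) (T : ℝ) (n : ℕ) : ℝ :=
  √(sSup (tailEnergy d X N n '' Icc 0 T))

theorem dissipation_nonneg (hd : ∀ n, 0 ≤ d (n + 1)) (X : ℕ → ℝ → ℝ) (n : ℕ) (ht : 0 ≤ t) :
    0 ≤ dissipation d X n t :=
  intervalIntegral.integral_nonneg ht fun _ _ =>
    mul_nonneg (mul_nonneg zero_le_two (hd n)) (sq_nonneg _)

theorem tailEnergy_term_nonneg (hd : ∀ n, 0 ≤ d (n + 1)) (X : ℕ → ℝ → ℝ) (n : ℕ) (ht : 0 ≤ t) :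
    0 ≤ X (n + 1) t ^ 2 + dissipation d X n t :=
  add_nonneg (sq_nonneg _) (dissipation_nonneg hd X n ht)

theorem tailEnergy_nonneg (hd : ∀ n, 0 ≤ d (n + 1)) (X : ℕ → ℝ → ℝ) (N n : ℕ) (ht : 0 ≤ t) :
    0 ≤ tailEnergy d X N n t :=
  Finset.sum_nonneg fun i _ => tailEnergy_term_nonneg hd X i ht

theorem sq_peak_le (hd : ∀ n, 0 ≤ d (n + 1)) (hT : 0 ≤ T) {M : ℝ}
    (hM : ∀ t ∈ Icc 0 T, tailEnergy d X N n t ≤ M) : peak d X N T n ^ 2 ≤ M := by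
  have hsup : sSup (tailEnergy d X N n '' Icc 0 T) ≤ M :=
    csSup_le ((nonempty_Icc.2 hT).image _) (forall_mem_image.2 hM)
  have hM₀ : 0 ≤ M := (tailEnergy_nonneg hd X N n le_rfl).trans (hM 0 ⟨le_rfl, hT⟩)
  rw [peak, Real.sq_sqrt']
  exact max_le hsup hM₀

namespace IsGalerkin

theorem hasDerivWithinAt_dissipation (hX : IsGalerkin a d x N T X) (n : ℕ) (ht : t ∈ Icc 0 T) :
    HasDerivWithinAt (dissipation d X n) (2 * d (n + 1) * X (n + 1) t ^ 2) (Icc 0 T) t :=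
  hasDerivWithinAt_integral_Icc (continuousOn_const.mul ((hX.continuousOn (n + 1)).pow 2)) ht

theorem dissipation_le (hX : IsGalerkin a d x N T X) (hd : ∀ n, 0 ≤ d (n + 1)) (n : ℕ)
    (ht : t ∈ Icc 0 T) : dissipation d X n t ≤ dissipation d X n T := by
  have hanti : AntitoneOn (fun t => -dissipation d X n t) (Icc 0 T) :=
    antitoneOn_Icc_of_hasDerivWithinAt_nonpos
      (fun t ht => (hX.hasDerivWithinAt_dissipation n ht).fun_neg)
      fun t _ => neg_nonpos.2 (mul_nonneg (mul_nonneg zero_le_two (hd n)) (sq_nonneg _))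
  exact neg_le_neg_iff.1 (hanti ht ⟨ht.1.trans ht.2, le_rfl⟩ ht.2)

theorem sum_dissipation_eq (hX : IsGalerkin a d x N T X) (n : ℕ) :
    ∑ i ∈ Finset.Ico n N, dissipation d X i T =
      dissipation d X n T + ∑ i ∈ Finset.Ico (n + 1) N, dissipation d X i T := by
  rcases lt_or_ge n N with hn | hn
  · exact Finset.sum_eq_sum_Ico_succ_bot hn _
  · have hzero : dissipation d X n T = 0 := by
      simp only [dissipation, hX.vanish (n + 1) (Nat.lt_succ_of_le hn), ne_eq, OfNat.ofNat_ne_zero,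
        not_false_eq_true, zero_pow, mul_zero, intervalIntegral.integral_zero]
    rw [Finset.Ico_eq_empty_of_le hn, Finset.Ico_eq_empty_of_le (hn.trans n.le_succ), hzero]
    simp only [Finset.sum_empty, add_zero]

theorem hasDerivWithinAt_tailEnergy (hX : IsGalerkin a d x N T X) (n : ℕ) (ht : t ∈ Icc 0 T) :
    HasDerivWithinAt (tailEnergy d X N n) (2 * (a n * X n t ^ 2 * X (n + 1) t)) (Icc 0 T) t := by
  rcases le_or_gt n N with hn | hn
  · have hsum := HasDerivWithinAt.fun_sum fun i (hi : i ∈ Finset.Ico n N) =>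
      ((hX.deriv i (Finset.mem_Ico.1 hi).2 t ht).fun_pow 2).fun_add
        (hX.hasDerivWithinAt_dissipation i ht)
    refine hsum.congr_deriv ?_
    have htele := sum_mul_dyadicField a d (fun m => X m t) hn
    rw [hX.vanish (N + 1) N.lt_succ_self, mul_zero, sub_zero, eq_sub_iff_add_eq,
      ← Finset.sum_add_distrib] at htele
    rw [← htele, Finset.mul_sum]
    refine Finset.sum_congr rfl fun i _ => ?_
    push_cast
    ring
  · have hzero : tailEnergy d X N n = fun _ => 0 := by
      funext s
      rw [tailEnergy, Finset.Ico_eq_empty_of_le hn.le, Finset.sum_empty]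
    rw [hzero, hX.vanish n hn]
    simpa using hasDerivWithinAt_const t (Icc 0 T) (0 : ℝ)

theorem tailEnergy_le_sq_peak (hX : IsGalerkin a d x N T X) (hd : ∀ n, 0 ≤ d (n + 1)) (n : ℕ)
    (ht : t ∈ Icc 0 T) : tailEnergy d X N n t ≤ peak d X N T n ^ 2 := by
  have hcont : ContinuousOn (tailEnergy d X N n) (Icc 0 T) := fun t ht =>
    (hX.hasDerivWithinAt_tailEnergy n ht).continuousWithinAt
  have hle := le_csSup (isCompact_Icc.bddAbove_image hcont) (mem_image_of_mem _ ht)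
  rwa [peak, Real.sq_sqrt ((tailEnergy_nonneg hd X N n ht.1).trans hle)]

theorem abs_le_peak (hX : IsGalerkin a d x N T X) (hd : ∀ n, 0 ≤ d (n + 1)) (n : ℕ)
    (ht : t ∈ Icc 0 T) : |X (n + 1) t| ≤ peak d X N T n := by
  rcases lt_or_ge n N with hn | hn
  · refine abs_le_of_sq_le_sq ?_ (Real.sqrt_nonneg _)
    calc X (n + 1) t ^ 2 ≤ X (n + 1) t ^ 2 + dissipation d X n t :=
          le_add_of_nonneg_right (dissipation_nonneg hd X n ht.1)
      _ ≤ tailEnergy d X N n t := Finset.single_le_sum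
          (f := fun i => X (i + 1) t ^ 2 + dissipation d X i t)
          (fun i _ => tailEnergy_term_nonneg hd X i ht.1) (Finset.mem_Ico.2 ⟨le_rfl, hn⟩)
      _ ≤ peak d X N T n ^ 2 := hX.tailEnergy_le_sq_peak hd n ht
  · rw [hX.vanish (n + 1) (Nat.lt_succ_of_le hn), abs_zero]
    exact Real.sqrt_nonneg _

theorem sum_dissipation_le_sq_peak (hX : IsGalerkin a d x N T X) (hd : ∀ n, 0 ≤ d (n + 1))
    (hT : 0 ≤ T) (n : ℕ) :
    ∑ i ∈ Finset.Ico n N, dissipation d X i T ≤ peak d X N T n ^ 2 :=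
  (Finset.sum_le_sum fun _ _ => le_add_of_nonneg_left (sq_nonneg _)).trans
    (hX.tailEnergy_le_sq_peak hd n ⟨hT, le_rfl⟩)

-- The flux into the component `n + 2` is at most `Φ G n` times `X (n + 2)` times the rate at which
-- the component `n + 1` dissipates.
theorem sq_peak_succ_le (hX : IsGalerkin a d x N T X) (hd : ∀ n, 0 ≤ d (n + 1))
    (had : ∀ n, |a (n + 1)| ≤ Φ * (d (n + 1) * G n)) (hG : ∀ n, 0 ≤ G n) (hΦ : 0 ≤ Φ)
    (hT : 0 ≤ T) (n : ℕ) :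
    peak d X N T (n + 1) ^ 2 ≤ tailEnergy d X N (n + 1) 0 +
      Φ * G n * dissipation d X n T * peak d X N T (n + 1) := by
  set p := peak d X N T (n + 1)
  have hp : 0 ≤ p := Real.sqrt_nonneg _
  have hanti : AntitoneOn
      (fun t => tailEnergy d X N (n + 1) t - Φ * G n * p * dissipation d X n t) (Icc 0 T) := by
    refine antitoneOn_Icc_of_hasDerivWithinAt_nonpos
      (fun t ht => (hX.hasDerivWithinAt_tailEnergy (n + 1) ht).fun_sub
        ((hX.hasDerivWithinAt_dissipation n ht).const_mul _)) fun t ht => ?_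
    have hflux : a (n + 1) * X (n + 2) t ≤ Φ * (d (n + 1) * G n) * p :=
      (le_abs_self _).trans ((abs_mul _ _).trans_le (mul_le_mul (had n)
        (hX.abs_le_peak hd (n + 1) ht) (abs_nonneg _) ((abs_nonneg _).trans (had n))))
    have := mul_le_mul_of_nonneg_right hflux (sq_nonneg (X (n + 1) t))
    linarith
  refine sq_peak_le hd hT fun t ht => ?_
  have hle := hanti ⟨le_rfl, hT⟩ ht ht.1
  have hzero : dissipation d X n 0 = 0 := intervalIntegral.integral_same
  have hmono := mul_le_mul_of_nonneg_left (hX.dissipation_le hd n ht)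
    (mul_nonneg (mul_nonneg hΦ (hG n)) hp)
  simp only [hzero, mul_zero, sub_zero] at hle
  linarith

theorem tailEnergy_zero (hX : IsGalerkin a d x N T X) (n : ℕ) :
    tailEnergy d X N n 0 = ∑ i ∈ Finset.Ico n N, x (i + 1) ^ 2 := by
  simp only [tailEnergy, dissipation, intervalIntegral.integral_same, add_zero]
  exact Finset.sum_congr rfl fun i hi => by rw [hX.init i (Finset.mem_Ico.1 hi).2]

theorem sq_peak_zero_le (hX : IsGalerkin a d x N T X) (hd : ∀ n, 0 ≤ d (n + 1)) (hT : 0 ≤ T) :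
    peak d X N T 0 ^ 2 ≤ ∑ i ∈ Finset.Ico 0 N, x (i + 1) ^ 2 := by
  have hanti : AntitoneOn (tailEnergy d X N 0) (Icc 0 T) :=
    antitoneOn_Icc_of_hasDerivWithinAt_nonpos
      (fun t ht => hX.hasDerivWithinAt_tailEnergy 0 ht) fun t _ => by
        simp [hX.zero t]
  rw [← hX.tailEnergy_zero]
  exact sq_peak_le hd hT fun t ht => hanti ⟨le_rfl, hT⟩ ht ht.1

end IsGalerkin

end TailEnergy

section UniformDecay

variable {a d x G : ℕ → ℝ} {Φ K : ℝ}

/-- A set of sequences bounded in every `H^s`, expressed through uniform geometric decay of the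
components at every rate. -/
def UniformRapidDecay (F : Set (ℕ → ℝ)) : Prop :=
  ∀ l ∈ Ioo (0 : ℝ) 1, ∃ C, 0 ≤ C ∧ ∀ y ∈ F, ∀ n, |y n| ≤ C * l ^ n

/-- The states visited by the Galerkin approximations of all orders on all time intervals. -/
def galerkinStates (a d x : ℕ → ℝ) : Set (ℕ → ℝ) :=
  {y | ∃ (N : ℕ) (T : ℝ) (X : ℕ → ℝ → ℝ), IsGalerkin a d x N T X ∧
    ∃ t ∈ Icc 0 T, y = fun n => X n t}

theorem sum_Ico_sq_le_of_abs_le_geometric {y : ℕ → ℝ} {C μ : ℝ} (hμ : μ ∈ Ioo (0 : ℝ) 1)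
    (hy : ∀ n, |y n| ≤ C * μ ^ n) (n N : ℕ) :
    ∑ i ∈ Finset.Ico n N, y i ^ 2 ≤ (C * μ ^ n / (1 - μ)) ^ 2 := by
  have hC : 0 ≤ C := by simpa using (abs_nonneg _).trans (hy 0)
  calc ∑ i ∈ Finset.Ico n N, y i ^ 2 = ∑ i ∈ Finset.Ico n N, |y i| ^ 2 := by simp only [sq_abs]
    _ ≤ (∑ i ∈ Finset.Ico n N, |y i|) ^ 2 :=
      Finset.sum_sq_le_sq_sum_of_nonneg fun i _ => abs_nonneg _
    _ ≤ (∑ i ∈ Finset.Ico n N, C * μ ^ i) ^ 2 := by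
      gcongr with i
      exact hy i
    _ ≤ (C * μ ^ n / (1 - μ)) ^ 2 := by
      rw [← Finset.mul_sum, mul_div_assoc]
      have hgeom := geom_sum_Ico_le_of_lt_one (m := n) (n := N) hμ.1.le hμ.2
      have hpow : 0 ≤ ∑ i ∈ Finset.Ico n N, μ ^ i :=
        Finset.sum_nonneg fun i _ => pow_nonneg hμ.1.le i
      gcongr

theorem le_add_of_sq_le_sq_add_mul {z e c : ℝ} (he : 0 ≤ e) (hc : 0 ≤ c)
    (h : z ^ 2 ≤ e ^ 2 + c * z) : z ≤ e + c := by
  by_contra! hz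
  nlinarith

theorem isCascade_sqrt {A B H l : ℝ} {f J r : ℕ → ℝ} (hG : ∀ n, 0 < G n) (hf : ∀ n, 0 ≤ f n)
    (hJ : ∀ n, 0 ≤ J n) (hJ₀ : J 0 ≤ H) (hA : 0 ≤ A) (hr : ∀ n, √(2 * r n) * G n ≤ B * l ^ n)
    (hJf : ∀ n, J n ≤ A * f n ^ 2 + r n) (hfJ : ∀ n, f (n + 1) ≤ G n * (J n - J (n + 1))) :
    IsCascade G (√(2 * A)) B (√H) l fun n => √(J n) where
  nonneg n := Real.sqrt_nonneg _
  antitone := antitone_nat_of_succ_le fun n => Real.sqrt_le_sqrt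
    (sub_nonneg.1 (nonneg_of_mul_nonneg_right ((hf (n + 1)).trans (hfJ n)) (hG n)))
  zero_le := Real.sqrt_le_sqrt hJ₀
  step n := by
    rcases le_total (J (n + 1)) (2 * r (n + 1)) with hsmall | hlarge
    · left
      exact (mul_le_mul_of_nonneg_right (Real.sqrt_le_sqrt hsmall) (hG _).le).trans (hr (n + 1))
    · right
      rw [Real.sq_sqrt (hJ _), Real.sq_sqrt (hJ _), mul_assoc]
      calc √(J (n + 1)) ≤ √(2 * A * f (n + 1) ^ 2) :=
            Real.sqrt_le_sqrt (by linarith [hJf (n + 1)])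
        _ = √(2 * A) * f (n + 1) := by rw [Real.sqrt_mul (by positivity), Real.sqrt_sq (hf _)]
        _ ≤ √(2 * A) * (G n * (J n - J (n + 1))) := by gcongr; exact hfJ n

theorem exists_forall_succ_le_geometric {A B l : ℝ} {r : ℕ → ℝ} (hA : 0 < A) (hG : ∀ n, 0 < G n)
    (hGK : ∀ n, G (n + 1) ≤ K * G n) (hGinv : ¬ Summable fun n => (G n)⁻¹)
    (hl : l ∈ Ioo (0 : ℝ) 1) (hr : ∀ n, √(2 * r n) * G n ≤ B * l ^ n) (H : ℝ) :
    ∃ C, 0 ≤ C ∧ ∀ f J : ℕ → ℝ, (∀ n, 0 ≤ f n) → (∀ n, 0 ≤ J n) → J 0 ≤ H →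
      (∀ n, J n ≤ A * f n ^ 2 + r n) → (∀ n, f (n + 1) ≤ G n * (J n - J (n + 1))) →
      ∀ n, f (n + 1) ≤ C * l ^ n := by
  obtain ⟨C, hC, hcascade⟩ := exists_forall_isCascade_mul_le (b := √(2 * A)) (by positivity) hG
    hGK hGinv hl.1 hl.2 B (√H)
  refine ⟨C * √H, by positivity, fun f J hf hJ hJ₀ hJf hfJ n => ?_⟩
  have hh := isCascade_sqrt hG hf hJ hJ₀ hA.le hr hJf hfJ
  calc f (n + 1) ≤ G n * J n :=
        (hfJ n).trans (mul_le_mul_of_nonneg_left (sub_le_self _ (hJ _)) (hG n).le)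
    _ = √(J n) * G n * √(J n) := by rw [mul_right_comm, Real.mul_self_sqrt (hJ n), mul_comm]
    _ ≤ C * l ^ n * √H := mul_le_mul (hcascade _ hh n) ((hh.antitone n.zero_le).trans hh.zero_le)
        (Real.sqrt_nonneg _) (mul_nonneg hC (pow_nonneg hl.1.le n))
    _ = C * √H * l ^ n := by ring

theorem sqrt_mul_sq_div_pow_mul_le {D l : ℝ} (hD : 0 ≤ D) (hl : 0 ≤ l) (hK : 0 < K)
    (hGK : ∀ n, G (n + 1) ≤ K * G n) (n : ℕ) :
    √(D * ((l / K) ^ 2) ^ n) * G n ≤ √D * G 0 * l ^ n :=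
  calc √(D * ((l / K) ^ 2) ^ n) * G n = √D * (l / K) ^ n * G n := by
        rw [Real.sqrt_mul hD, pow_right_comm, Real.sqrt_sq (by positivity)]
    _ ≤ √D * (l / K) ^ n * (K ^ n * G 0) := by
        gcongr
        exact le_geom hK.le n fun k _ => hGK k
    _ = √D * G 0 * l ^ n := by
        rw [div_pow]
        field_simp

/-- The sum of `Φ` times the energy dissipated by the components `n + 1, …, N` during `[0, T]` and
of a term that absorbs initial data bounded by `C * μ ^ n`. -/
noncomputable def cascadeEnergy (d : ℕ → ℝ) (X : ℕ → ℝ → ℝ) (N : ℕ) (T Φ C μ : ℝ) (n : ℕ) : ℝ :=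
  Φ * ∑ i ∈ Finset.Ico n N, dissipation d X i T + C / (1 - μ) ^ 2 * μ ^ n

section

variable {N : ℕ} {T C μ : ℝ} {X : ℕ → ℝ → ℝ}

theorem cascadeEnergy_nonneg (hd : ∀ n, 0 ≤ d (n + 1)) (hT : 0 ≤ T) (hΦ : 0 ≤ Φ) (hC : 0 ≤ C)
    (hμ : 0 ≤ μ) (X : ℕ → ℝ → ℝ) (N n : ℕ) : 0 ≤ cascadeEnergy d X N T Φ C μ n :=
  add_nonneg (mul_nonneg hΦ (Finset.sum_nonneg fun i _ => dissipation_nonneg hd X i hT))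
    (by positivity)

theorem IsGalerkin.peak_zero_le (hX : IsGalerkin a d x N T X) (hd : ∀ n, 0 ≤ d (n + 1))
    (hT : 0 ≤ T) (hC : 0 ≤ C) (hμ : μ ∈ Ioo (0 : ℝ) 1) (hx : ∀ n, |x (n + 1)| ≤ C * μ ^ n) :
    peak d X N T 0 ≤ C / (1 - μ) := by
  have hsum := sum_Ico_sq_le_of_abs_le_geometric hμ hx 0 N
  rw [pow_zero, mul_one] at hsum
  exact le_of_sq_le_sq ((hX.sq_peak_zero_le hd hT).trans hsum)
    (div_nonneg hC (sub_nonneg.2 hμ.2.le))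

theorem IsGalerkin.peak_succ_le (hX : IsGalerkin a d x N T X) (hd : ∀ n, 0 ≤ d (n + 1))
    (had : ∀ n, |a (n + 1)| ≤ Φ * (d (n + 1) * G n)) (hG : ∀ n, 1 ≤ G n) (hΦ : 0 ≤ Φ)
    (hT : 0 ≤ T) (hC : 0 ≤ C) (hμ : μ ∈ Ioo (0 : ℝ) 1) (hx : ∀ n, |x (n + 1)| ≤ C * μ ^ n)
    (n : ℕ) :
    peak d X N T (n + 1) ≤
      G n * (cascadeEnergy d X N T Φ C μ n - cascadeEnergy d X N T Φ C μ (n + 1)) := by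
  have hG₀ : ∀ n, 0 ≤ G n := fun n => zero_le_one.trans (hG n)
  have hμ₁ : 0 < 1 - μ := sub_pos.2 hμ.2
  have hμ₀ : 0 < μ := hμ.1
  have hdata : tailEnergy d X N (n + 1) 0 ≤ (C * μ ^ (n + 1) / (1 - μ)) ^ 2 := by
    rw [hX.tailEnergy_zero]
    exact sum_Ico_sq_le_of_abs_le_geometric hμ hx (n + 1) N
  have hpeak : peak d X N T (n + 1) ≤
      C * μ ^ (n + 1) / (1 - μ) + Φ * G n * dissipation d X n T :=
    le_add_of_sq_le_sq_add_mul (by positivity)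
      (mul_nonneg (mul_nonneg hΦ (hG₀ n)) (dissipation_nonneg hd X n hT))
      ((hX.sq_peak_succ_le hd had hG₀ hΦ hT n).trans (by gcongr))
  calc peak d X N T (n + 1) ≤ C * μ ^ (n + 1) / (1 - μ) + Φ * G n * dissipation d X n T := hpeak
    _ ≤ G n * (C * μ ^ n / (1 - μ)) + Φ * G n * dissipation d X n T := by
      gcongr ?_ + _
      refine le_trans ?_ (le_mul_of_one_le_left (by positivity) (hG n))
      gcongr ?_ / _
      exact mul_le_mul_of_nonneg_left (pow_le_pow_of_le_one hμ₀.le hμ.2.le n.le_succ) hC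
    _ = G n * (cascadeEnergy d X N T Φ C μ n - cascadeEnergy d X N T Φ C μ (n + 1)) := by
      rw [cascadeEnergy, cascadeEnergy, hX.sum_dissipation_eq n]
      field_simp
      ring

theorem IsGalerkin.cascadeEnergy_le (hX : IsGalerkin a d x N T X) (hd : ∀ n, 0 ≤ d (n + 1))
    (hΦ : 0 ≤ Φ) (hT : 0 ≤ T) (n : ℕ) :
    cascadeEnergy d X N T Φ C μ n ≤ Φ * peak d X N T n ^ 2 + C / (1 - μ) ^ 2 * μ ^ n := by
  rw [cascadeEnergy]
  gcongr
  exact hX.sum_dissipation_le_sq_peak hd hT n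

end

theorem exists_forall_peak_le (hd : ∀ n, 0 ≤ d (n + 1))
    (had : ∀ n, |a (n + 1)| ≤ Φ * (d (n + 1) * G n)) (hΦ : 0 < Φ) (hG : ∀ n, 1 ≤ G n)
    (hK : 1 ≤ K) (hGK : ∀ n, G (n + 1) ≤ K * G n) (hGinv : ¬ Summable fun n => (G n)⁻¹)
    (hx : UniformRapidDecay {fun n => x (n + 1)}) {l : ℝ} (hl : l ∈ Ioo (0 : ℝ) 1) :
    ∃ C, 0 ≤ C ∧ ∀ N T X, 0 ≤ T → IsGalerkin a d x N T X → ∀ n, peak d X N T n ≤ C * l ^ n := by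
  have hl₀ : 0 < l := hl.1
  have hK₀ : 0 < K := zero_lt_one.trans_le hK
  have hG₀ : ∀ n, 0 < G n := fun n => zero_lt_one.trans_le (hG n)
  set μ := (l / K) ^ 2
  have hμ : μ ∈ Ioo (0 : ℝ) 1 := ⟨by positivity, pow_lt_one₀ (by positivity)
    ((div_lt_one hK₀).2 (hl.2.trans_le hK)) two_ne_zero⟩
  have hμ₁ : 0 < 1 - μ := sub_pos.2 hμ.2
  obtain ⟨C, hC, hCx⟩ := hx μ hμ
  simp only [mem_singleton_iff, forall_eq] at hCx
  obtain ⟨D, hD, hcascade⟩ := exists_forall_succ_le_geometric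
    (r := fun n => C / (1 - μ) ^ 2 * μ ^ n) hΦ hG₀ hGK hGinv hl (fun n => by
      rw [← mul_assoc]
      exact sqrt_mul_sq_div_pow_mul_le (by positivity) hl₀.le hK₀ hGK n)
    (Φ * (C / (1 - μ)) ^ 2 + C / (1 - μ) ^ 2 * μ ^ 0)
  refine ⟨C / (1 - μ) + D / l, by positivity, fun N T X hT hX n => ?_⟩
  have hpeak₀ : peak d X N T 0 ≤ C / (1 - μ) := hX.peak_zero_le hd hT hC hμ hCx
  rcases n with - | n
  · rw [pow_zero, mul_one]
    exact hpeak₀.trans (le_add_of_nonneg_right (by positivity))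
  · calc peak d X N T (n + 1) ≤ D * l ^ n :=
          hcascade (peak d X N T) (cascadeEnergy d X N T Φ C μ) (fun n => Real.sqrt_nonneg _)
            (cascadeEnergy_nonneg hd hT hΦ.le hC hμ.1.le X N)
            ((hX.cascadeEnergy_le hd hΦ.le hT 0).trans (by
              gcongr
              exact Real.sqrt_nonneg _))
            (hX.cascadeEnergy_le hd hΦ.le hT)
            (hX.peak_succ_le hd had hG hΦ.le hT hC hμ hCx) n
      _ = D / l * l ^ (n + 1) := by rw [pow_succ]; field_simp
      _ ≤ (C / (1 - μ) + D / l) * l ^ (n + 1) := by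
        gcongr
        exact le_add_of_nonneg_left (by positivity)

theorem uniformRapidDecay_galerkinStates (hd : ∀ n, 0 ≤ d (n + 1))
    (had : ∀ n, |a (n + 1)| ≤ Φ * (d (n + 1) * G n)) (hΦ : 0 < Φ) (hG : ∀ n, 1 ≤ G n)
    (hK : 1 ≤ K) (hGK : ∀ n, G (n + 1) ≤ K * G n) (hGinv : ¬ Summable fun n => (G n)⁻¹)
    (hx : UniformRapidDecay {fun n => x (n + 1)}) : UniformRapidDecay (galerkinStates a d x) := by
  intro l hl
  obtain ⟨C, hC, hpeak⟩ := exists_forall_peak_le hd had hΦ hG hK hGK hGinv hx hl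
  have hl₀ : 0 < l := hl.1
  refine ⟨C / l, by positivity, ?_⟩
  rintro y ⟨N, T, X, hX, t, ht, rfl⟩ n
  rcases n with - | n
  · simp only [hX.zero t, abs_zero]
    positivity
  · calc |X (n + 1) t| ≤ C * l ^ n :=
          (hX.abs_le_peak hd n ht).trans (hpeak N T X (ht.1.trans ht.2) hX n)
      _ = C / l * l ^ (n + 1) := by rw [pow_succ]; field_simp

end UniformDecay

section Comparison

variable {a d x : ℕ → ℝ} {X Y : ℕ → ℝ → ℝ} {N : ℕ} {M T : ℝ}

theorem sum_sub_mul_dyadicField_sub (a d : ℕ → ℝ) {u v : ℕ → ℝ} (huv : u 0 = v 0) (N : ℕ) :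
    ∑ i ∈ Finset.range N,
        (u (i + 1) - v (i + 1)) * (dyadicField a d u i - dyadicField a d v i) =
      ∑ i ∈ Finset.range N, (a i * u i * (u i - v i) * (u (i + 1) - v (i + 1))
          - a (i + 1) * u (i + 2) * (u (i + 1) - v (i + 1)) ^ 2
          - d (i + 1) * (u (i + 1) - v (i + 1)) ^ 2)
        - a N * v N * (u N - v N) * (u (N + 1) - v (N + 1)) := by
  induction N with
  | zero => simp [huv]
  | succ N ih =>
    rw [Finset.sum_range_succ, Finset.sum_range_succ, ih, dyadicField, dyadicField]
    ring

theorem mul_mul_sub_mul_sq_sub_mul_sq_le {p p' e z w : ℝ} (hp : |p| ≤ M) (hp' : |p'| ≤ M)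
    (he : 0 ≤ e) : p * z * w - p' * w ^ 2 - e * w ^ 2 ≤ M / 2 * (z ^ 2 + 3 * w ^ 2) := by
  have hcross : p * z * w ≤ M * ((z ^ 2 + w ^ 2) / 2) :=
    calc p * z * w ≤ |p| * |z * w| := by
          rw [mul_assoc, ← abs_mul]
          exact le_abs_self _
      _ ≤ M * ((z ^ 2 + w ^ 2) / 2) := by
          gcongr
          · exact (abs_nonneg p).trans hp
          · exact abs_le.2 ⟨by linarith [sq_nonneg (z + w)], by linarith [sq_nonneg (z - w)]⟩
  have hsq : -p' * w ^ 2 ≤ M * w ^ 2 :=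
    mul_le_mul_of_nonneg_right (neg_le.1 (abs_le.1 hp').1) (sq_nonneg w)
  linarith [mul_nonneg he (sq_nonneg w)]

theorem sum_range_sq_le_sum_range_succ_sq {z : ℕ → ℝ} (hz : z 0 = 0) (N : ℕ) :
    ∑ i ∈ Finset.range N, z i ^ 2 ≤ ∑ i ∈ Finset.range N, z (i + 1) ^ 2 := by
  have h := Finset.sum_range_succ' (fun i => z i ^ 2) N
  rw [Finset.sum_range_succ, hz] at h
  linarith [sq_nonneg (z N)]

theorem two_mul_sum_sub_mul_dyadicField_sub_le (hd : ∀ n, 0 ≤ d (n + 1)) {u v : ℕ → ℝ}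
    (huv : u 0 = v 0) (hu : ∀ n, |a n * u n| ≤ M) (hu' : ∀ n, |a n * u (n + 1)| ≤ M) (N : ℕ) :
    2 * ∑ i ∈ Finset.range N,
        (u (i + 1) - v (i + 1)) * (dyadicField a d u i - dyadicField a d v i) ≤
      4 * M * ∑ i ∈ Finset.range N, (u (i + 1) - v (i + 1)) ^ 2
        + 2 * |a N * v N * (u N - v N) * (u (N + 1) - v (N + 1))| := by
  have hM : 0 ≤ M := (abs_nonneg _).trans (hu 0)
  have hsum := Finset.sum_le_sum fun i (_ : i ∈ Finset.range N) =>
    mul_mul_sub_mul_sq_sub_mul_sq_le (z := u i - v i) (w := u (i + 1) - v (i + 1)) (hu i)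
      (hu' (i + 1)) (hd i)
  rw [← Finset.mul_sum, Finset.sum_add_distrib, ← Finset.mul_sum] at hsum
  have hshift := mul_le_mul_of_nonneg_left
    (sum_range_sq_le_sum_range_succ_sq (z := fun i => u i - v i) (sub_eq_zero.2 huv) N) hM
  rw [sum_sub_mul_dyadicField_sub a d huv]
  linarith [neg_abs_le (a N * v N * (u N - v N) * (u (N + 1) - v (N + 1)))]

theorem IsSolutionBelow.hasDerivWithinAt_sum_sq_sub {S : Set ℝ} (hX : IsSolutionBelow a d x N S X)
    (hY : IsSolutionBelow a d x N S Y) {t : ℝ} (ht : t ∈ S) :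
    HasDerivWithinAt (fun t => ∑ i ∈ Finset.range N, (X (i + 1) t - Y (i + 1) t) ^ 2)
      (2 * ∑ i ∈ Finset.range N, (X (i + 1) t - Y (i + 1) t) *
        (dyadicField a d (fun m => X m t) i - dyadicField a d (fun m => Y m t) i)) S t := by
  rw [Finset.mul_sum]
  refine HasDerivWithinAt.fun_sum fun i hi => ?_
  have hi : i < N := Finset.mem_range.1 hi
  simpa [mul_assoc] using ((hX.deriv i hi t ht).fun_sub (hY.deriv i hi t ht)).fun_pow 2

theorem IsSolutionBelow.sum_sq_sub_le {q : ℝ → ℝ} (hX : IsSolutionBelow a d x N (Icc 0 T) X)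
    (hY : IsSolutionBelow a d x N (Icc 0 T) Y) (hd : ∀ n, 0 ≤ d (n + 1))
    (hM : ∀ n, ∀ t ∈ Icc 0 T, |a n * X n t| ≤ M)
    (hM' : ∀ n, ∀ t ∈ Icc 0 T, |a n * X (n + 1) t| ≤ M) (hq : ContinuousOn q (Icc 0 T))
    (hqN : ∀ t ∈ Icc 0 T, 2 * |a N * Y N t * (X N t - Y N t) * (X (N + 1) t - Y (N + 1) t)| ≤ q t)
    {t : ℝ} (ht : t ∈ Icc 0 T) :
    ∑ i ∈ Finset.range N, (X (i + 1) t - Y (i + 1) t) ^ 2 ≤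
      Real.exp (4 * M * t) * ∫ s in (0 : ℝ)..t, q s := by
  have hM₀ : 0 ≤ M := (abs_nonneg _).trans (hM 0 t ht)
  have hinit : ∑ i ∈ Finset.range N, (X (i + 1) 0 - Y (i + 1) 0) ^ 2 = 0 :=
    Finset.sum_eq_zero fun i hi => by
      rw [hX.init i (Finset.mem_range.1 hi), hY.init i (Finset.mem_range.1 hi), sub_self,
        zero_pow two_ne_zero]
  have hgronwall := le_exp_mul_add_integral_of_deriv_le (K := 4 * M) (by positivity)
    (fun s hs => hX.hasDerivWithinAt_sum_sq_sub hY hs) hq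
    (fun s hs => le_trans (by positivity) (hqN s hs))
    (fun s hs => (two_mul_sum_sub_mul_dyadicField_sub_le (u := fun m => X m s)
      (v := fun m => Y m s) hd ((hX.zero s).trans (hY.zero s).symm) (fun n => hM n s hs)
      (fun n => hM' n s hs) N).trans (by gcongr; exact hqN s hs)) t ht
  rwa [hinit, zero_add] at hgronwall

end Comparison

section Limit

theorem continuousOn_of_tendsto_of_hasDerivWithinAt {ι : Type*} {l : Filter ι} [l.NeBot]
    {f f' : ι → ℝ → ℝ} {F : ℝ → ℝ} {S : Set ℝ} {L : ℝ} (hS : Convex ℝ S)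
    (hf : ∀ᶠ m in l, ∀ t ∈ S, HasDerivWithinAt (f m) (f' m t) S t)
    (hL : ∀ᶠ m in l, ∀ t ∈ S, |f' m t| ≤ L)
    (hF : ∀ t ∈ S, Tendsto (fun m => f m t) l (𝓝 (F t))) : ContinuousOn F S := by
  refine (LipschitzOnWith.of_dist_le_mul (K := L.toNNReal) fun t ht s hs => ?_).continuousOn
  refine le_of_tendsto ((hF t ht).dist (hF s hs)) ?_
  filter_upwards [hf, hL] with m hfm hLm
  rw [dist_eq_norm, dist_eq_norm]
  exact hS.norm_image_sub_le_of_norm_hasDerivWithin_le hfm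
    (fun r hr => (hLm r hr).trans (Real.le_coe_toNNReal L)) hs ht

theorem hasDerivWithinAt_Icc_of_tendsto {ι : Type*} {l : Filter ι} [l.NeBot]
    [l.IsCountablyGenerated] {f f' : ι → ℝ → ℝ} {F F' : ℝ → ℝ} {b c L : ℝ}
    (hf : ∀ᶠ m in l, ∀ t ∈ Icc b c, HasDerivWithinAt (f m) (f' m t) (Icc b c) t)
    (hf' : ∀ᶠ m in l, ContinuousOn (f' m) (Icc b c))
    (hL : ∀ᶠ m in l, ∀ t ∈ Icc b c, |f' m t| ≤ L)
    (hF : ∀ t ∈ Icc b c, Tendsto (fun m => f m t) l (𝓝 (F t)))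
    (hF' : ∀ t ∈ Icc b c, Tendsto (fun m => f' m t) l (𝓝 (F' t)))
    (hF'c : ContinuousOn F' (Icc b c)) {t : ℝ} (ht : t ∈ Icc b c) :
    HasDerivWithinAt F (F' t) (Icc b c) t := by
  have hintegral : ∀ u ∈ Icc b c, F u = F b + ∫ s in b..u, F' s := by
    intro u hu
    have hsub : uIoc b u ⊆ Icc b c := by
      rw [uIoc_of_le hu.1]
      exact Ioc_subset_Icc_self.trans (Icc_subset_Icc_right hu.2)
    refine tendsto_nhds_unique (hF u hu) (((hF b ⟨le_rfl, hu.1.trans hu.2⟩).add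
      (intervalIntegral.tendsto_integral_filter_of_dominated_convergence (fun _ => L)
        (hf'.mono fun m hm => (hm.mono hsub).aestronglyMeasurable measurableSet_uIoc)
        (hL.mono fun m hm => .of_forall fun s hs => hm s (hsub hs)) intervalIntegrable_const
        (.of_forall fun s hs => hF' s (hsub hs)))).congr' ?_)
    filter_upwards [hf, hf'] with m hm hm'
    rw [intervalIntegral.integral_eq_sub_of_hasDerivAt_of_le hu.1
      (fun s hs => ((hm s ⟨hs.1, hs.2.trans hu.2⟩).continuousWithinAt.mono
        (Icc_subset_Icc_right hu.2)))
      (fun s hs => (hm s ⟨hs.1.le, hs.2.le.trans hu.2⟩).hasDerivAt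
        (Icc_mem_nhds hs.1 (hs.2.trans_le hu.2)))
      ((hm'.mono (Icc_subset_Icc_right hu.2)).intervalIntegrable_of_Icc hu.1),
      add_sub_cancel]
  exact ((hasDerivWithinAt_integral_Icc hF'c ht).const_add (F b)).congr hintegral
    (hintegral t ht)

variable {a d x : ℕ → ℝ} {X Y : ℕ → ℝ → ℝ} {N : ℕ} {C Φ κ T : ℝ}

theorem continuousOn_dyadicField {S : Set ℝ} {n : ℕ}
    (hX : ∀ i ≤ n + 2, ContinuousOn (X i) S) :
    ContinuousOn (fun t => dyadicField a d (fun m => X m t) n) S := by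
  have h₀ := hX n (by omega)
  have h₁ := hX (n + 1) (by omega)
  have h₂ := hX (n + 2) le_rfl
  unfold dyadicField
  fun_prop

theorem tendsto_dyadicField {ι : Type*} {l : Filter ι} {u : ι → ℕ → ℝ} {v : ℕ → ℝ}
    (h : ∀ n, Tendsto (fun m => u m n) l (𝓝 (v n))) (n : ℕ) :
    Tendsto (fun m => dyadicField a d (u m) n) l (𝓝 (dyadicField a d v n)) :=
  ((((h n).pow 2).const_mul _).sub (((h _).const_mul _).mul (h _))).sub ((h _).const_mul _)

theorem isSolutionBelow_of_tendsto {ι : Type*} {l : Filter ι} [l.NeBot]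
    [l.IsCountablyGenerated] {U : ι → ℕ → ℝ → ℝ} {B : ℝ} (hT : 0 ≤ T)
    (hU : ∀ N, ∀ᶠ m in l, IsSolutionBelow a d x N (Icc 0 T) (U m))
    (hB : ∀ᶠ m in l, ∀ t ∈ Icc 0 T, ∀ n, |U m n t| ≤ B) (hX₀ : ∀ t, X 0 t = 0)
    (hlim : ∀ n, ∀ t ∈ Icc 0 T, Tendsto (fun m => U m n t) l (𝓝 (X n t))) (N : ℕ) :
    IsSolutionBelow a d x N (Icc 0 T) X := by
  have hderiv : ∀ n, ∀ᶠ m in l, ∀ t ∈ Icc 0 T,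
      HasDerivWithinAt (U m (n + 1)) (dyadicField a d (fun i => U m i t) n) (Icc 0 T) t :=
    fun n => (hU (n + 1)).mono fun m hm t ht => hm.deriv n n.lt_succ_self t ht
  have hbound := fun n => hB.mono fun m hm t ht =>
    abs_dyadicField_le (a := a) (d := d) (n := n) (hm t ht)
  have hcont : ∀ n, ContinuousOn (X n) (Icc 0 T) := by
    rintro (- | n)
    · rw [funext hX₀]
      exact continuousOn_const
    · exact continuousOn_of_tendsto_of_hasDerivWithinAt (convex_Icc 0 T) (hderiv n) (hbound n)
        (hlim (n + 1))
  refine ⟨hX₀, fun n _ => ?_, fun n _ t ht => ?_⟩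
  · exact tendsto_nhds_unique (hlim (n + 1) 0 ⟨le_rfl, hT⟩) (tendsto_const_nhds.congr'
      ((hU (n + 1)).mono fun m hm => (hm.init n n.lt_succ_self).symm))
  · exact hasDerivWithinAt_Icc_of_tendsto (hderiv n)
      ((hU (n + 2)).mono fun m hm => continuousOn_dyadicField fun i hi => hm.continuousOn hi)
      (hbound n) (hlim (n + 1)) (fun s hs => tendsto_dyadicField (fun i => hlim i s hs) n)
      (continuousOn_dyadicField fun i _ => hcont i) ht

theorem isSolutionBelow_Ici (hX : ∀ T, 0 ≤ T → IsSolutionBelow a d x N (Icc 0 T) X) :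
    IsSolutionBelow a d x N (Ici 0) X where
  zero := (hX 0 le_rfl).zero
  init := (hX 0 le_rfl).init
  deriv n hn t (ht : 0 ≤ t) := ((hX (t + 1) (by positivity)).deriv n hn t
    ⟨ht, (lt_add_one t).le⟩).mono_of_mem_nhdsWithin
      (mem_nhdsWithin.2 ⟨Iio (t + 1), isOpen_Iio, lt_add_one t, fun _ hs => ⟨hs.2, hs.1.le⟩⟩)

theorem abs_mul_le_of_geometric {α y : ℝ} {n : ℕ} (hκ : 0 < κ) (hα : |α| ≤ Φ * κ ^ n)
    (hy : |y| ≤ C * κ⁻¹ ^ n) : |α * y| ≤ Φ * C :=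
  calc |α * y| = |α| * |y| := abs_mul α y
    _ ≤ Φ * κ ^ n * (C * κ⁻¹ ^ n) :=
      mul_le_mul hα hy (abs_nonneg _) ((abs_nonneg _).trans hα)
    _ = Φ * C * (κ * κ⁻¹) ^ n := by ring
    _ = Φ * C := by rw [mul_inv_cancel₀ hκ.ne', one_pow, mul_one]

theorem abs_mul_succ_le_of_geometric {y : ℕ → ℝ} (hκ : 1 < κ) (ha : ∀ n, |a n| ≤ Φ * κ ^ n)
    (hy : ∀ n, |y n| ≤ C * κ⁻¹ ^ n) (n : ℕ) : |a n * y (n + 1)| ≤ Φ * C := by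
  have hκ₀ : 0 < κ := zero_lt_one.trans hκ
  have hC : 0 ≤ C := by simpa using (abs_nonneg _).trans (hy 0)
  refine abs_mul_le_of_geometric hκ₀ (ha n) ((hy (n + 1)).trans ?_)
  exact mul_le_mul_of_nonneg_left (pow_le_pow_of_le_one (by positivity)
    (inv_le_one_of_one_le₀ hκ.le) n.le_succ) hC

theorem boundary_flux_le_of_geometric {u v : ℕ → ℝ} (hκ : 1 < κ) (ha : ∀ n, |a n| ≤ Φ * κ ^ n)
    (hu : ∀ n, |u n| ≤ C * κ⁻¹ ^ n) (hv : ∀ n, |v n| ≤ C * κ⁻¹ ^ n) (N : ℕ) :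
    2 * |a N * v N * (u N - v N) * (u (N + 1) - v (N + 1))| ≤ 8 * Φ * C ^ 3 * κ⁻¹ ^ N := by
  have hκ₀ : 0 < κ := zero_lt_one.trans hκ
  have hκ₁ : κ⁻¹ ≤ 1 := inv_le_one_of_one_le₀ hκ.le
  have hC : 0 ≤ C := by simpa using (abs_nonneg _).trans (hu 0)
  have hsub : ∀ n, |u n - v n| ≤ 2 * C * κ⁻¹ ^ n := fun n =>
    (abs_sub _ _).trans (by linarith [hu n, hv n])
  have hflux : |a N * v N| ≤ Φ * C := abs_mul_le_of_geometric hκ₀ (ha N) (hv N)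
  have hΦC : 0 ≤ Φ * C := (abs_nonneg _).trans hflux
  calc 2 * |a N * v N * (u N - v N) * (u (N + 1) - v (N + 1))|
      = 2 * (|a N * v N| * |u N - v N| * |u (N + 1) - v (N + 1)|) := by
        rw [abs_mul, abs_mul (a N * v N)]
    _ ≤ 2 * (Φ * C * (2 * C * κ⁻¹ ^ N) * (2 * C)) := by
        gcongr
        · exact hsub N
        · exact (hsub (N + 1)).trans
            (mul_le_of_le_one_right (by positivity) (pow_le_one₀ (by positivity) hκ₁))
    _ = 8 * Φ * C ^ 3 * κ⁻¹ ^ N := by ring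

theorem IsSolutionBelow.sum_sq_sub_le_of_geometric (hX : IsSolutionBelow a d x N (Icc 0 T) X)
    (hY : IsSolutionBelow a d x N (Icc 0 T) Y) (hd : ∀ n, 0 ≤ d (n + 1)) (hκ : 1 < κ)
    (ha : ∀ n, |a n| ≤ Φ * κ ^ n) (hXC : ∀ t ∈ Icc 0 T, ∀ n, |X n t| ≤ C * κ⁻¹ ^ n)
    (hYC : ∀ t ∈ Icc 0 T, ∀ n, |Y n t| ≤ C * κ⁻¹ ^ n) {t : ℝ} (ht : t ∈ Icc 0 T) :
    ∑ i ∈ Finset.range N, (X (i + 1) t - Y (i + 1) t) ^ 2 ≤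
      Real.exp (4 * (Φ * C) * t) * t * (8 * Φ * C ^ 3) * κ⁻¹ ^ N := by
  refine (hX.sum_sq_sub_le hY hd
    (fun n s hs => abs_mul_le_of_geometric (zero_lt_one.trans hκ) (ha n) (hXC s hs n))
    (fun n s hs => abs_mul_succ_le_of_geometric hκ ha (hXC s hs) n) continuousOn_const
    (fun s hs => boundary_flux_le_of_geometric hκ ha (hXC s hs) (hYC s hs) N) ht).trans_eq ?_
  rw [intervalIntegral.integral_const, smul_eq_mul, sub_zero]
  ring

theorem cauchySeq_of_isGalerkin {U : ℕ → ℕ → ℝ → ℝ} (hU : ∀ N, IsGalerkin a d x N N (U N))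
    (hd : ∀ n, 0 ≤ d (n + 1)) (hκ : 1 < κ) (ha : ∀ n, |a n| ≤ Φ * κ ^ n)
    (hC : ∀ y ∈ galerkinStates a d x, ∀ n, |y n| ≤ C * κ⁻¹ ^ n) {t : ℝ} (ht : 0 ≤ t) (n : ℕ) :
    CauchySeq fun N => U N n t := by
  have hdecay : ∀ N : ℕ, ∀ s ∈ Icc 0 (N : ℝ), ∀ n, |U N n s| ≤ C * κ⁻¹ ^ n := fun N s hs =>
    hC _ ⟨N, N, U N, hU N, s, hs, rfl⟩
  have hsmall := (tendsto_pow_atTop_nhds_zero_of_lt_one (inv_nonneg.2 (zero_lt_one.trans hκ).le)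
    (inv_lt_one_of_one_lt₀ hκ)).const_mul (Real.exp (4 * (Φ * C) * t) * t * (8 * Φ * C ^ 3))
  rw [mul_zero] at hsmall
  rw [Metric.cauchySeq_iff']
  intro ε hε
  obtain ⟨N, hN, hnN, htN⟩ := ((hsmall.eventually_lt_const (by positivity : 0 < ε ^ 2)).and
    ((eventually_ge_atTop n).and (eventually_ge_atTop ⌈t⌉₊))).exists
  refine ⟨N, fun N' hN' => ?_⟩
  rcases n with - | n
  · rw [(hU N').zero, (hU N).zero, dist_self]
    exact hε
  have hsub : Icc 0 (N : ℝ) ⊆ Icc 0 (N' : ℝ) := Icc_subset_Icc_right (Nat.cast_le.2 hN')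
  have hsum := (hU N).sum_sq_sub_le_of_geometric ((hU N').mono hN' hsub) hd hκ ha (hdecay N)
    (fun s hs => hdecay N' s (hsub hs)) ⟨ht, Nat.ceil_le.1 htN⟩
  have hterm := Finset.single_le_sum (f := fun i => (U N (i + 1) t - U N' (i + 1) t) ^ 2)
    (fun i _ => sq_nonneg _) (Finset.mem_range.2 hnN)
  rw [dist_comm, Real.dist_eq]
  exact abs_lt_of_sq_lt_sq ((hterm.trans hsum).trans_lt hN) hε.le

theorem exists_solution_of_uniformRapidDecay (hd : ∀ n, 0 ≤ d (n + 1)) (hκ : 1 < κ)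
    (ha : ∀ n, |a n| ≤ Φ * κ ^ n) (hdecay : UniformRapidDecay (galerkinStates a d x)) :
    ∃ X : ℕ → ℝ → ℝ, (∀ N, IsSolutionBelow a d x N (Ici 0) X) ∧
      UniformRapidDecay ((fun t n => X n t) '' Ici 0) := by
  choose U hU using fun N : ℕ => exists_isGalerkin hd x N (Nat.cast_nonneg (α := ℝ) N)
  have hmem : ∀ t : ℝ, 0 ≤ t → ∀ᶠ N : ℕ in atTop, t ∈ Icc 0 (N : ℝ) := fun t ht =>
    (eventually_ge_atTop ⌈t⌉₊).mono fun N hN => ⟨ht, Nat.ceil_le.1 hN⟩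
  have hκ' : κ⁻¹ ∈ Ioo (0 : ℝ) 1 :=
    ⟨inv_pos.2 (zero_lt_one.trans hκ), inv_lt_one_of_one_lt₀ hκ⟩
  obtain ⟨C, hC, hCdecay⟩ := hdecay κ⁻¹ hκ'
  let X : ℕ → ℝ → ℝ := fun n t => limUnder atTop fun N => U N n t
  have hlim : ∀ n t, 0 ≤ t → Tendsto (fun N => U N n t) atTop (𝓝 (X n t)) := fun n t ht =>
    (cauchySeq_of_isGalerkin hU hd hκ ha hCdecay ht n).tendsto_limUnder
  have hX₀ : ∀ t, X 0 t = 0 := fun t => by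
    simp only [X, (hU _).zero]
    exact tendsto_const_nhds.limUnder_eq
  refine ⟨X, fun N => isSolutionBelow_Ici fun T hT => isSolutionBelow_of_tendsto (U := U)
    (B := C) hT (fun N => ?_) ?_ hX₀ (fun n t ht => hlim n t ht.1) N, fun l hl => ?_⟩
  · filter_upwards [eventually_ge_atTop N, hmem T hT] with m hm hTm
    exact (hU m).mono hm (Icc_subset_Icc_right hTm.2)
  · filter_upwards [hmem T hT] with m hTm t ht n
    exact (hCdecay _ ⟨m, m, U m, hU m, t, ⟨ht.1, ht.2.trans hTm.2⟩, rfl⟩ n).trans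
      (mul_le_of_le_one_right hC (pow_le_one₀ hκ'.1.le hκ'.2.le))
  · obtain ⟨C, hC, hCdecay⟩ := hdecay l hl
    refine ⟨C, hC, ?_⟩
    rintro - ⟨t, ht, rfl⟩ n
    refine le_of_tendsto (hlim n t ht).abs ?_
    filter_upwards [hmem t ht] with m htm
    exact hCdecay _ ⟨m, m, U m, hU m, t, htm, rfl⟩ n

end Limit

section Uniqueness

theorem tendsto_integral_zero_of_lintegral_tsum_ne_top {α : Type*} [MeasurableSpace α]
    {μ : Measure α} {f : ℕ → α → ℝ} (hf : ∀ n, AEStronglyMeasurable (f n) μ)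
    (hf₀ : ∀ n t, 0 ≤ f n t) (h : ∫⁻ t, ∑' n, ENNReal.ofReal (f n t) ∂μ ≠ ⊤) :
    Tendsto (fun n => ∫ t, f n t ∂μ) atTop (𝓝 0) := by
  rw [lintegral_tsum fun n => (hf n).aemeasurable.ennreal_ofReal] at h
  have hlim := (ENNReal.tendsto_toReal ENNReal.zero_ne_top).comp
    (ENNReal.tendsto_atTop_zero_of_tsum_ne_top h)
  exact hlim.congr fun n => (integral_eq_lintegral_of_nonneg_ae (.of_forall (hf₀ n)) (hf n)).symm

theorem mul_add_mul_add_le_sum_cubes {x y u v : ℝ} (hx : 0 ≤ x) (hy : 0 ≤ y) (hu : 0 ≤ u)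
    (hv : 0 ≤ v) : y * (x + y) * (u + v) ≤ 16 * (x ^ 3 + y ^ 3 + (u ^ 3 + v ^ 3)) :=
  calc y * (x + y) * (u + v)
      ≤ (x + y + (u + v)) * (x + y + (u + v)) * (x + y + (u + v)) := by
        gcongr ?_ * ?_ * ?_ <;> linarith
    _ = (x + y + (u + v)) ^ 3 := by ring
    _ ≤ 4 * ((x + y) ^ 3 + (u + v) ^ 3) :=
      (add_pow_le (by positivity) (by positivity) 3).trans_eq (by norm_num)
    _ ≤ 16 * (x ^ 3 + y ^ 3 + (u ^ 3 + v ^ 3)) := by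
      have hxy := add_pow_le hx hy 3
      have huv := add_pow_le hu hv 3
      norm_num at hxy huv
      linarith

variable {a d x : ℕ → ℝ} {β Φ M T : ℝ} {X Y : ℕ → ℝ → ℝ}

theorem kk_pos (β : ℝ) (n : ℕ) : 0 < kk β n := Real.rpow_pos_of_pos two_pos _

theorem kk_eq_pow (β : ℝ) (n : ℕ) : kk β n = ((2 : ℝ) ^ β) ^ n := by
  rw [kk, Real.rpow_mul zero_le_two, Real.rpow_natCast]

theorem kk_le_kk_succ (hβ : 0 ≤ β) (n : ℕ) : kk β n ≤ kk β (n + 1) := by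
  rw [kk_eq_pow, kk_eq_pow]
  exact pow_le_pow_right₀ (Real.one_le_rpow one_le_two hβ) n.le_succ

theorem memL3W_iff : MemL3W β X T ↔
    ∫⁻ t in Ioc 0 T, ∑' n : ℕ, ENNReal.ofReal (kk β (n + 1) * |X (n + 1) t| ^ 3) < ⊤ := by
  simp only [MemL3W, kk, Nat.cast_add, Nat.cast_one]

theorem tendsto_integral_kk_mul_abs_cube (hX : ∀ n, ContinuousOn (X n) (Icc 0 T)) (hT : 0 ≤ T)
    (hX₃ : MemL3W β X T) :
    Tendsto (fun N => ∫ t in (0 : ℝ)..T, kk β N * |X N t| ^ 3) atTop (𝓝 0) := by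
  rw [← tendsto_add_atTop_iff_nat 1]
  simp only [intervalIntegral.integral_of_le hT]
  refine tendsto_integral_zero_of_lintegral_tsum_ne_top (fun n => ?_) (fun n t => ?_)
    (memL3W_iff.1 hX₃).ne
  · exact (continuousOn_const.mul (((hX (n + 1)).mono Ioc_subset_Icc_self).abs.pow
      3)).aestronglyMeasurable measurableSet_Ioc
  · exact mul_nonneg (kk_pos β (n + 1)).le (by positivity)

/-- The density of the `N`-th component of two functions in the norm of `L³([0, T]; W^{β/3, 3})`. -/
noncomputable def cubicDensity (β : ℝ) (X Y : ℕ → ℝ → ℝ) (N : ℕ) (t : ℝ) : ℝ :=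
  kk β N * |X N t| ^ 3 + kk β N * |Y N t| ^ 3

theorem continuousOn_cubicDensity {S : Set ℝ} (hX : ∀ n, ContinuousOn (X n) S)
    (hY : ∀ n, ContinuousOn (Y n) S) (N : ℕ) : ContinuousOn (cubicDensity β X Y N) S :=
  (continuousOn_const.mul ((hX N).abs.pow 3)).add (continuousOn_const.mul ((hY N).abs.pow 3))

theorem tendsto_integral_cubicDensity (hX : ∀ n, ContinuousOn (X n) (Icc 0 T))
    (hY : ∀ n, ContinuousOn (Y n) (Icc 0 T)) (hT : 0 ≤ T) (hX₃ : MemL3W β X T)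
    (hY₃ : MemL3W β Y T) :
    Tendsto (fun N => ∫ t in (0 : ℝ)..T, cubicDensity β X Y N t) atTop (𝓝 0) := by
  have hint : ∀ Z : ℕ → ℝ → ℝ, (∀ n, ContinuousOn (Z n) (Icc 0 T)) → ∀ N,
      IntervalIntegrable (fun t => kk β N * |Z N t| ^ 3) volume 0 T := fun Z hZ N =>
    (continuousOn_const.mul ((hZ N).abs.pow 3)).intervalIntegrable_of_Icc hT
  have h := (tendsto_integral_kk_mul_abs_cube hX hT hX₃).add
    (tendsto_integral_kk_mul_abs_cube hY hT hY₃)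
  rw [add_zero] at h
  exact h.congr fun N => (intervalIntegral.integral_add (hint X hX N) (hint Y hY N)).symm

theorem boundary_flux_le_cubicDensity (hβ : 0 ≤ β) (ha : ∀ n, |a n| ≤ Φ * kk β n)
    (X Y : ℕ → ℝ → ℝ) (N : ℕ) (t : ℝ) :
    2 * |a N * Y N t * (X N t - Y N t) * (X (N + 1) t - Y (N + 1) t)| ≤
      32 * Φ * (cubicDensity β X Y N t + cubicDensity β X Y (N + 1) t) := by
  have hk : 0 < kk β N := kk_pos β N
  have hΦ : 0 ≤ Φ := nonneg_of_mul_nonneg_left ((abs_nonneg _).trans (ha N)) hk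
  have hcubes := mul_add_mul_add_le_sum_cubes (abs_nonneg (X N t)) (abs_nonneg (Y N t))
    (abs_nonneg (X (N + 1) t)) (abs_nonneg (Y (N + 1) t))
  calc 2 * |a N * Y N t * (X N t - Y N t) * (X (N + 1) t - Y (N + 1) t)|
      = 2 * (|a N| * |Y N t| * |X N t - Y N t| * |X (N + 1) t - Y (N + 1) t|) := by
        simp only [abs_mul]
    _ ≤ 2 * (Φ * kk β N * |Y N t| * (|X N t| + |Y N t|) * (|X (N + 1) t| + |Y (N + 1) t|)) := by
        gcongr
        exacts [ha N, abs_sub _ _, abs_sub _ _]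
    _ = 2 * (Φ * kk β N) *
          (|Y N t| * (|X N t| + |Y N t|) * (|X (N + 1) t| + |Y (N + 1) t|)) := by ring
    _ ≤ 2 * (Φ * kk β N) * (16 * (|X N t| ^ 3 + |Y N t| ^ 3
          + (|X (N + 1) t| ^ 3 + |Y (N + 1) t| ^ 3))) := by gcongr
    _ = 32 * Φ * (kk β N * (|X N t| ^ 3 + |Y N t| ^ 3)
          + kk β N * (|X (N + 1) t| ^ 3 + |Y (N + 1) t| ^ 3)) := by ring
    _ ≤ 32 * Φ * (kk β N * (|X N t| ^ 3 + |Y N t| ^ 3)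
          + kk β (N + 1) * (|X (N + 1) t| ^ 3 + |Y (N + 1) t| ^ 3)) := by
        gcongr
        exact kk_le_kk_succ hβ N
    _ = 32 * Φ * (cubicDensity β X Y N t + cubicDensity β X Y (N + 1) t) := by
        rw [cubicDensity, cubicDensity]
        ring

theorem eq_of_memL3W (hβ : 0 ≤ β) (hd : ∀ n, 0 ≤ d (n + 1)) (ha : ∀ n, |a n| ≤ Φ * kk β n)
    (hX : ∀ N, IsSolutionBelow a d x N (Icc 0 T) X)
    (hY : ∀ N, IsSolutionBelow a d x N (Icc 0 T) Y)
    (hM : ∀ n, ∀ t ∈ Icc 0 T, |a n * X n t| ≤ M)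
    (hM' : ∀ n, ∀ t ∈ Icc 0 T, |a n * X (n + 1) t| ≤ M)
    (hX₃ : MemL3W β X T) (hY₃ : MemL3W β Y T) (hT : 0 ≤ T) (n : ℕ) : Y n T = X n T := by
  rcases n with - | n
  · rw [(hX 0).zero, (hY 0).zero]
  have hXc : ∀ n, ContinuousOn (X n) (Icc 0 T) := fun n => (hX n).continuousOn le_rfl
  have hYc : ∀ n, ContinuousOn (Y n) (Icc 0 T) := fun n => (hY n).continuousOn le_rfl
  set w := cubicDensity β X Y
  have hwc : ∀ N, ContinuousOn (w N) (Icc 0 T) := continuousOn_cubicDensity hXc hYc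
  have hw := tendsto_integral_cubicDensity hXc hYc hT hX₃ hY₃
  have hflux : Tendsto (fun N => Real.exp (4 * M * T) *
      ∫ t in (0 : ℝ)..T, 32 * Φ * (w N t + w (N + 1) t)) atTop (𝓝 0) := by
    have h := ((hw.add ((tendsto_add_atTop_iff_nat 1).2 hw)).const_mul (32 * Φ)).const_mul
      (Real.exp (4 * M * T))
    rw [add_zero, mul_zero, mul_zero] at h
    refine h.congr fun N => ?_
    rw [intervalIntegral.integral_const_mul, intervalIntegral.integral_add
      ((hwc N).intervalIntegrable_of_Icc hT) ((hwc (N + 1)).intervalIntegrable_of_Icc hT)]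
  have hsq : (X (n + 1) T - Y (n + 1) T) ^ 2 ≤ 0 := by
    refine ge_of_tendsto hflux ?_
    filter_upwards [eventually_gt_atTop n] with N hN
    exact (Finset.single_le_sum (f := fun i => (X (i + 1) T - Y (i + 1) T) ^ 2)
      (fun i _ => sq_nonneg _) (Finset.mem_range.2 hN)).trans
      ((hX N).sum_sq_sub_le (hY N) hd hM hM'
        (continuousOn_const.mul ((hwc N).add (hwc (N + 1))))
        (fun t _ => boundary_flux_le_cubicDensity hβ ha X Y N t) ⟨hT, le_rfl⟩)
  exact (sub_eq_zero.1 (pow_eq_zero_iff two_ne_zero |>.1 (hsq.antisymm (sq_nonneg _)))).symm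

end Uniqueness

section FunctionSpaces

variable {β s : ℝ} {x : ℕ → ℝ} {X : ℕ → ℝ → ℝ} {F : Set (ℕ → ℝ)} {S : Set ℝ}

theorem memHs_iff : MemHs s x ↔ Summable fun n => kk (2 * s) (n + 1) * x (n + 1) ^ 2 := by
  simp only [MemHs, kk, Nat.cast_add, Nat.cast_one]

theorem memLinftyHs_of_forall_le {u : ℕ → ℝ} (hu : Summable u)
    (hX : ∀ t ∈ S, ∀ n, kk (2 * s) (n + 1) * X (n + 1) t ^ 2 ≤ u n) : MemLinftyHs s X S := by
  refine ⟨∑' n, u n, fun t ht => ?_⟩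
  simp only [kk, Nat.cast_add, Nat.cast_one] at hX
  have hsum := Summable.of_nonneg_of_le (fun n => by positivity) (hX t ht) hu
  exact ⟨hsum, hsum.tsum_le_tsum (hX t ht) hu⟩

theorem uniformRapidDecay_of_memHs (hx : ∀ s, 0 < s → MemHs s x) :
    UniformRapidDecay {fun n => x (n + 1)} := by
  rintro l ⟨hl, hl₁⟩
  have hsum := memHs_iff.1 (hx (-Real.logb 2 l) (neg_pos.2 (Real.logb_neg one_lt_two hl hl₁)))
  have hkk : ∀ n, kk (2 * -Real.logb 2 l) n * (l ^ n) ^ 2 = 1 := fun n => by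
    rw [kk_eq_pow, mul_comm 2, Real.rpow_mul zero_le_two, Real.rpow_neg zero_le_two,
      Real.rpow_logb two_pos (by norm_num) hl, Real.rpow_two, ← pow_mul, ← pow_mul, mul_comm n,
      ← mul_pow, inv_mul_cancel₀ hl.ne', one_pow]
  set k := kk (2 * -Real.logb 2 l)
  set E := ∑' n, k (n + 1) * x (n + 1) ^ 2
  have hterm : ∀ n, 0 ≤ k (n + 1) * x (n + 1) ^ 2 := fun n =>
    mul_nonneg (kk_pos _ _).le (sq_nonneg _)
  have hE : 0 ≤ E := tsum_nonneg hterm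
  refine ⟨√E, Real.sqrt_nonneg E, forall_eq.2 fun n => ?_⟩
  have hsq : x (n + 1) ^ 2 ≤ (√E * l ^ (n + 1)) ^ 2 :=
    calc x (n + 1) ^ 2 = k (n + 1) * x (n + 1) ^ 2 * (l ^ (n + 1)) ^ 2 := by
          rw [mul_right_comm, hkk, one_mul]
      _ ≤ E * (l ^ (n + 1)) ^ 2 := by
          gcongr
          exact hsum.le_tsum n fun m _ => hterm m
      _ = (√E * l ^ (n + 1)) ^ 2 := by rw [mul_pow √E, Real.sq_sqrt hE]
  exact (abs_le_of_sq_le_sq hsq (by positivity)).trans (mul_le_mul_of_nonneg_left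
    (pow_le_pow_of_le_one hl.le hl₁.le n.le_succ) (Real.sqrt_nonneg E))

theorem UniformRapidDecay.mono {F' : Set (ℕ → ℝ)} (hF : UniformRapidDecay F) (h : F' ⊆ F) :
    UniformRapidDecay F' := fun l hl => (hF l hl).imp fun _ hC => ⟨hC.1, fun y hy => hC.2 y (h hy)⟩

theorem UniformRapidDecay.exists_kk_mul_abs_pow_le (hF : UniformRapidDecay F) (s : ℝ) {p : ℕ}
    (hp : p ≠ 0) : ∃ C, ∀ y ∈ F, ∀ n, kk s n * |y n| ^ p ≤ C * (1 / 2) ^ n := by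
  set κ := (2 : ℝ) ^ s with hκ
  have hκ₀ : 0 < κ := Real.rpow_pos_of_pos two_pos s
  set l := min (1 / 2) (1 / (2 * κ))
  have hl : 0 < l := by positivity
  have hl₁ : l < 1 := (min_le_left _ _).trans_lt one_half_lt_one
  have hκl : κ * l ≤ 1 / 2 :=
    (mul_le_mul_of_nonneg_left (min_le_right _ _) hκ₀.le).trans_eq (by field_simp)
  obtain ⟨C, hC, hCF⟩ := hF l ⟨hl, hl₁⟩
  refine ⟨C ^ p, fun y hy n => ?_⟩
  calc kk s n * |y n| ^ p ≤ κ ^ n * (C * l ^ n) ^ p := by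
        rw [kk_eq_pow, ← hκ]
        gcongr
        exact hCF y hy n
    _ = C ^ p * (κ ^ n * (l ^ n) ^ p) := by ring
    _ ≤ C ^ p * (κ ^ n * l ^ n) := by
        gcongr
        exact pow_le_of_le_one (by positivity) (pow_le_one₀ hl.le hl₁.le) hp
    _ = C ^ p * (κ * l) ^ n := by rw [mul_pow]
    _ ≤ C ^ p * (1 / 2) ^ n := by gcongr

theorem UniformRapidDecay.memLinftyHs (hX : UniformRapidDecay ((fun t n => X n t) '' S)) (s : ℝ) :
    MemLinftyHs s X S := by
  obtain ⟨C, hC⟩ := hX.exists_kk_mul_abs_pow_le (2 * s) two_ne_zero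
  refine memLinftyHs_of_forall_le
    (((summable_nat_add_iff 1).2 summable_geometric_two).mul_left C) fun t ht n => ?_
  rw [← sq_abs]
  exact hC _ (mem_image_of_mem _ ht) (n + 1)

theorem UniformRapidDecay.memL3W {T : ℝ} (hX : UniformRapidDecay ((fun t n => X n t) '' Ioc 0 T))
    (β : ℝ) : MemL3W β X T := by
  obtain ⟨C, hC⟩ := hX.exists_kk_mul_abs_pow_le β three_ne_zero
  have hgeom : Summable fun n : ℕ => C * (1 / 2) ^ (n + 1) :=
    ((summable_nat_add_iff 1).2 summable_geometric_two).mul_left C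
  rw [memL3W_iff]
  calc ∫⁻ t in Ioc 0 T, ∑' n, ENNReal.ofReal (kk β (n + 1) * |X (n + 1) t| ^ 3)
      ≤ ∫⁻ _ in Ioc 0 T, ∑' n : ℕ, ENNReal.ofReal (C * (1 / 2) ^ (n + 1)) :=
        setLIntegral_mono' measurableSet_Ioc fun t ht => ENNReal.tsum_le_tsum fun n =>
          ENNReal.ofReal_le_ofReal (hC _ (mem_image_of_mem _ ht) (n + 1))
    _ < ⊤ := by
        rw [setLIntegral_const]
        exact ENNReal.mul_lt_top hgeom.tsum_ofReal_lt_top measure_Ioc_lt_top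

end FunctionSpaces

section GlobalRegularity

variable {a d G x : ℕ → ℝ} {β Φ K : ℝ} {X Y : ℕ → ℝ → ℝ}

theorem UniformRapidDecay.eq_of_isSolutionBelow {T : ℝ} (hβ : 0 < β) (hd : ∀ n, 0 ≤ d (n + 1))
    (ha : ∀ n, |a n| ≤ Φ * kk β n) (hXdecay : UniformRapidDecay ((fun t n => X n t) '' Ici 0))
    (hX : ∀ N, IsSolutionBelow a d x N (Ici 0) X) (hY : ∀ N, IsSolutionBelow a d x N (Ici 0) Y)
    (hY₃ : MemL3W β Y T) (hT : 0 ≤ T) (n : ℕ) : Y n T = X n T := by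
  have hκ : 1 < (2 : ℝ) ^ β := Real.one_lt_rpow one_lt_two hβ
  have ha' : ∀ n, |a n| ≤ Φ * ((2 : ℝ) ^ β) ^ n := fun n => kk_eq_pow β n ▸ ha n
  obtain ⟨C, -, hC⟩ := hXdecay ((2 : ℝ) ^ β)⁻¹
    ⟨inv_pos.2 (one_pos.trans hκ), inv_lt_one_of_one_lt₀ hκ⟩
  have hXC : ∀ t ∈ Icc 0 T, ∀ n, |X n t| ≤ C * ((2 : ℝ) ^ β)⁻¹ ^ n := fun t ht =>
    hC _ (mem_image_of_mem _ ht.1)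
  refine eq_of_memL3W hβ.le hd ha (fun N => (hX N).mono le_rfl Icc_subset_Ici_self)
    (fun N => (hY N).mono le_rfl Icc_subset_Ici_self)
    (fun n t ht => abs_mul_le_of_geometric (one_pos.trans hκ) (ha' n) (hXC t ht n))
    (fun n t ht => abs_mul_succ_le_of_geometric hκ ha' (hXC t ht) n) ?_ hY₃ hT n
  exact (hXdecay.mono (image_mono fun t ht => ht.1.le)).memL3W β

theorem uniformRapidDecay_galerkinStates_of_eventually_growth (hd : ∀ n, 0 ≤ d (n + 1))
    (had : ∀ n, |a (n + 1)| ≤ Φ * (d (n + 1) * G n)) (hΦ : 0 < Φ) (hG : ∀ n, 0 < G n)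
    (hGK : ∀ᶠ n in atTop, G (n + 1) ≤ K * G n) (hGinv : ¬ Summable fun n => (G n)⁻¹)
    (hx : UniformRapidDecay {fun n => x (n + 1)}) : UniformRapidDecay (galerkinStates a d x) := by
  obtain ⟨K', hK', hGK'⟩ := exists_forall_succ_le_mul hG hGK
  refine uniformRapidDecay_galerkinStates (G := fun n => max (G n) 1) hd (fun n => ?_) hΦ
    (fun n => le_max_right _ _) hK' (fun n => ?_) (not_summable_inv_max_one hGinv) hx
  · refine (had n).trans ?_
    gcongr
    exacts [hd n, le_max_left _ _]
  · rw [mul_max_of_nonneg _ _ (zero_le_one.trans hK'), mul_one]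
    exact max_le_max (hGK' n) hK'

theorem eventually_succ_le_of_monotone_div {g : ℕ → ℝ} (hg : ∀ n, 1 ≤ n → 0 < g n)
    (hkg : ∃ N, ∀ n m, N ≤ n → n ≤ m → kk β n / g n ≤ kk β m / g m) :
    ∃ K, ∀ᶠ n in atTop, g (n + 1) ≤ K * g n := by
  obtain ⟨N, hN⟩ := hkg
  refine ⟨2 ^ β, ?_⟩
  filter_upwards [eventually_ge_atTop N, eventually_ge_atTop 1] with n hn hn₁
  have hle := hN n (n + 1) hn n.le_succ
  rw [div_le_div_iff₀ (hg n hn₁) (hg (n + 1) n.succ_pos), kk_eq_pow, kk_eq_pow, pow_succ,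
    mul_assoc] at hle
  exact le_of_mul_le_mul_left hle (by positivity)

theorem dyadic_global_regularity_general (hβ : 0 < β) {φ g : ℕ → ℝ} (hφ : ∃ Φ, ∀ n, |φ n| ≤ Φ)
    (hg : ∀ n, 1 ≤ n → 0 < g n) (hgK : ∃ K, ∀ᶠ n in atTop, g (n + 1) ≤ K * g n)
    (hgdiv : ¬ Summable fun n => (g (n + 1))⁻¹) (hx : ∀ s, 0 < s → MemHs s x) :
    ∃ X, IsDyadicSolution β φ g x X ∧ (∀ s, 0 < s → MemLinftyHs s X (Ici 0)) ∧
      (∀ T, 0 < T → MemL3W β X T) ∧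
      ∀ Y, IsDyadicSolution β φ g x Y → (∀ T, 0 < T → MemL3W β Y T) →
        ∀ n, 1 ≤ n → ∀ t, 0 ≤ t → Y n t = X n t := by
  obtain ⟨Φ₀, hΦ₀⟩ := hφ
  obtain ⟨K, hgK⟩ := hgK
  have hg' : ∀ n, 0 < g (n + 1) := fun n => hg (n + 1) n.succ_pos
  have hd : ∀ n, 0 ≤ kk β (n + 1) / g (n + 1) := fun n => (div_pos (kk_pos β _) (hg' n)).le
  have ha : ∀ n, |φ n * kk β n| ≤ max Φ₀ 1 * kk β n := fun n => by
    rw [abs_mul, abs_of_pos (kk_pos β n)]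
    exact mul_le_mul_of_nonneg_right ((hΦ₀ n).trans (le_max_left _ _)) (kk_pos β n).le
  obtain ⟨X, hX, hXdecay⟩ := exists_solution_of_uniformRapidDecay
    (a := fun n => φ n * kk β n) (d := fun n => kk β n / g n) hd (Real.one_lt_rpow one_lt_two hβ)
    (fun n => (ha n).trans_eq (by rw [kk_eq_pow]))
    (uniformRapidDecay_galerkinStates_of_eventually_growth hd
      (fun n => (ha (n + 1)).trans_eq (by rw [div_mul_cancel₀ _ (hg' n).ne'])) (by positivity) hg'
      ((tendsto_add_atTop_nat 1).eventually hgK) hgdiv (uniformRapidDecay_of_memHs hx))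
  refine ⟨X, isDyadicSolution_iff.2 hX, fun s _ => hXdecay.memLinftyHs s, fun T _ => ?_,
    fun Y hY hY₃ n hn t ht => ?_⟩
  · exact (hXdecay.mono (image_mono fun t ht => ht.1.le)).memL3W β
  · rcases ht.eq_or_lt with rfl | ht₀
    · rw [hY.2.1 n hn, (isDyadicSolution_iff.2 hX).2.1 n hn]
    · exact hXdecay.eq_of_isSolutionBelow hβ hd ha hX (isDyadicSolution_iff.1 hY) (hY₃ t ht₀) ht n

end GlobalRegularity

/-- Theorem 3.1 (main): under monotone `g`, eventually monotone `k/g` and `∑ 1/gₙ = ∞`,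
for smooth data there is a global smooth solution, unique in `L³_loc([0,∞); W^{β/3,3})`. -/
theorem dyadic_global_regularity
    (β : ℝ) (hβ : 0 < β) (φ g : ℕ → ℝ)
    (hφ : ∃ Φ : ℝ, ∀ n : ℕ, |φ n| ≤ Φ)
    (hgpos : ∀ n : ℕ, 1 ≤ n → 0 < g n)
    (hgmono : ∀ n m : ℕ, 1 ≤ n → n ≤ m → g n ≤ g m)
    (hkg : ∃ N : ℕ, ∀ n m : ℕ, N ≤ n → n ≤ m → kk β n / g n ≤ kk β m / g m)
    (hgdiv : ¬ Summable fun n : ℕ => (g (n + 1))⁻¹)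
    (x : ℕ → ℝ) (hx : ∀ s : ℝ, 0 < s → MemHs s x) :
    ∃ X : ℕ → ℝ → ℝ, IsDyadicSolution β φ g x X ∧
      (∀ s : ℝ, 0 < s → MemLinftyHs s X (Set.Ici 0)) ∧
      (∀ T : ℝ, 0 < T → MemL3W β X T) ∧
      (∀ Y : ℕ → ℝ → ℝ, IsDyadicSolution β φ g x Y →
        (∀ T : ℝ, 0 < T → MemL3W β Y T) →
        ∀ n : ℕ, 1 ≤ n → ∀ t : ℝ, 0 ≤ t → Y n t = X n t) :=
  dyadic_global_regularity_general hβ hφ hgpos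
    (eventually_succ_le_of_monotone_div hgpos hkg) hgdiv hx
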